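/- arXiv:1307.5019 — 2 statements merged into one kernel-verified Lean document; each statement's English description precedes it below -/
import Mathlib

section
/- Let λ > 0. There exists a constant C = C(λ, σ) > 0 such that for the function C_σ^λ(x) = lim_{ε→0⁺} ∫_{y>0, ε≤|x−y|≤1} K_σ^λ(x,y)(x−y) dy (which exists for every x > 0): if σ = 1/2 then |C_{1/2}^λ(x)| ≤ C (1 + 1_{(0,1)}(x) |ln x|) for all x > 0, and if 1/2 < σ < 1 then |C_σ^λ(x)| ≤ C x^{1−2σ} for all x > 0. -/
open Real MeasureTheory Set Filter

noncomputable section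

/-- The modified Bessel function of the first kind `I_ν(z)`. -/
def besselI (ν z : ℝ) : ℝ :=
  ∑' k : ℕ, (z / 2) ^ (2 * (k : ℝ) + ν) / ((Nat.factorial k : ℝ) * Real.Gamma ((k : ℝ) + ν + 1))

/-- The Bessel heat kernel `W_t^λ(x,y)`. -/
def besselHeatKernel (lam t x y : ℝ) : ℝ :=
  Real.sqrt (x * y) / (2 * t) * besselI (lam - 1 / 2) (x * y / (2 * t)) *
    Real.exp (-(x ^ 2 + y ^ 2) / (4 * t))

/-- The Bessel–Poisson kernel `P_t^λ(x,y)`, obtained by subordination. -/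
def besselPoissonKernel (lam t x y : ℝ) : ℝ :=
  t / (2 * Real.sqrt Real.pi) *
    ∫ s in Set.Ioi (0 : ℝ),
      s ^ (-(3 : ℝ) / 2) * Real.exp (-t ^ 2 / (4 * s)) * besselHeatKernel lam s x y

/-- The Bessel heat semigroup `W_t^λ u (x)`. -/
def heatSemigroup (lam : ℝ) (u : ℝ → ℝ) (t x : ℝ) : ℝ :=
  ∫ y in Set.Ioi (0 : ℝ), besselHeatKernel lam t x y * u y

/-- The Bessel–Poisson semigroup `P_t^λ f (x)`. -/
def poissonSemigroup (lam : ℝ) (f : ℝ → ℝ) (t x : ℝ) : ℝ :=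
  ∫ y in Set.Ioi (0 : ℝ), besselPoissonKernel lam t x y * f y

/-- The set of Hölder quotients of `f` on `(0,∞)`. -/
def holderRatioSet (α : ℝ) (f : ℝ → ℝ) : Set ℝ :=
  {r | ∃ x y : ℝ, 0 < x ∧ 0 < y ∧ x ≠ y ∧ r = |f x - f y| / |x - y| ^ α}

/-- The set of growth quotients `|f x|/x^α` of `f` on `(0,∞)`. -/
def growthRatioSet (α : ℝ) (f : ℝ → ℝ) : Set ℝ :=
  {r | ∃ x : ℝ, 0 < x ∧ r = |f x| / x ^ α}

/-- Membership in the Hölder space `C^α_+` (equal to `Lip_+` when `α = 1`). -/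
def MemHolderPlus (α : ℝ) (f : ℝ → ℝ) : Prop :=
  ContinuousOn f (Set.Ioi 0) ∧ BddAbove (holderRatioSet α f) ∧ BddAbove (growthRatioSet α f)

/-- The `C^α_+` norm. -/
def holderPlusNorm (α : ℝ) (f : ℝ → ℝ) : ℝ :=
  sSup (holderRatioSet α f) + sSup (growthRatioSet α f)

/-- `Γ(-σ)`, written through the functional equation `Γ(-σ) = Γ(2-σ)/((-σ)(1-σ))`. -/
def gammaNeg (σ : ℝ) : ℝ := Real.Gamma (2 - σ) / (-σ * (1 - σ))

/-- The kernel `K_σ^λ(x,y)`. -/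
def fracKernelK (lam σ x y : ℝ) : ℝ :=
  1 / (-gammaNeg σ) * ∫ t in Set.Ioi (0 : ℝ), besselHeatKernel lam t x y * t ^ (-1 - σ)

/-- `W_t^λ 1 (x)`. -/
def heatOne (lam t x : ℝ) : ℝ := ∫ y in Set.Ioi (0 : ℝ), besselHeatKernel lam t x y

/-- The function `B_σ^λ(x)`. -/
def fracFunB (lam σ x : ℝ) : ℝ :=
  1 / gammaNeg σ * ∫ t in Set.Ioi (0 : ℝ), (heatOne lam t x - 1) * t ^ (-1 - σ)

/-- The integer `m` with `m - 1 ≤ β < m`. -/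
def fracOrder (β : ℝ) : ℕ := Nat.floor β + 1

/-- The Segovia–Wheeden fractional derivative `∂_t^β F(t)`, a complex number. -/
def fracDeriv (β : ℝ) (F : ℝ → ℝ) (t : ℝ) : ℂ :=
  Complex.exp (-(Real.pi * ((fracOrder β : ℝ) - β)) * Complex.I) /
      Complex.ofReal (Real.Gamma ((fracOrder β : ℝ) - β)) *
    Complex.ofReal
      (∫ s in Set.Ioi (0 : ℝ),
        iteratedDeriv (fracOrder β) F (t + s) * s ^ ((fracOrder β : ℝ) - β - 1))

/-!
Poisson's integral writes `√z e^{-z} I_ν(z)` as a Laplace transform, so by Watson's lemma this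
function is bounded on `(0, ∞)` and approaches its limit at infinity at rate `O(1/z)`. Inserting
this in the subordination integral gives `|K_σ^λ(x, y)| ≲ |x - y|^{-1-2σ}` everywhere and
`K_σ^λ(x, y) = κ |x - y|^{-1-2σ} + O((xy)^{-σ} |x - y|⁻¹)`. After multiplication by `x - y`, the
singular part becomes odd about `x`; restricted to `|x - y| ≤ min(1, x/2)` it contributes nothing to
the truncated integrals. What remains is dominated by the integrable function `(x + |x - y|)^{-2σ}`,
which gives both the existence of the limit and the bound `∫ t in x..x + 1, t^{-2σ}`.
-/

section PoissonIntegral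

lemma integral_rpow_mul_one_sub_rpow {a b : ℝ} (ha : 0 < a) (hb : 0 < b) :
    ∫ r in Ioo (0 : ℝ) 1, r ^ (a - 1) * (1 - r) ^ (b - 1) = Gamma a * Gamma b / Gamma (a + b) := by
  have hcast : ∫ r in Ioo (0 : ℝ) 1, (r : ℂ) ^ ((a : ℂ) - 1) * (1 - (r : ℂ)) ^ ((b : ℂ) - 1) =
      ∫ r in Ioo (0 : ℝ) 1, ((r ^ (a - 1) * (1 - r) ^ (b - 1) : ℝ) : ℂ) := by
    refine setIntegral_congr_fun measurableSet_Ioo fun r hr => ?_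
    rw [Complex.ofReal_mul, Complex.ofReal_cpow hr.1.le, Complex.ofReal_cpow (sub_pos.2 hr.2).le]
    push_cast
    rfl
  rw [← ProbabilityTheory.beta, ProbabilityTheory.beta_eq_betaIntegralReal a b ha hb,
    Complex.betaIntegral, intervalIntegral.integral_of_le zero_le_one,
    integral_Ioc_eq_integral_Ioo, hcast, integral_complex_ofReal, Complex.ofReal_re]

lemma integral_rpow_mul_one_sub_sq_rpow {a b : ℝ} (ha : 0 < a) (hb : 0 < b) :
    ∫ s in Ioo (0 : ℝ) 1, s ^ (2 * a - 1) * (1 - s ^ 2) ^ (b - 1) =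
      Gamma a * Gamma b / (2 * Gamma (a + b)) := by
  have himage : (fun s : ℝ => s ^ 2) '' Ioo 0 1 = Ioo 0 1 := by
    ext r
    refine ⟨?_, fun hr => ⟨√r, ⟨sqrt_pos.2 hr.1, ?_⟩, sq_sqrt hr.1.le⟩⟩
    · rintro ⟨s, hs, rfl⟩
      exact ⟨pow_pos hs.1 2, pow_lt_one₀ hs.1.le hs.2 two_ne_zero⟩
    · exact (sqrt_lt_sqrt hr.1.le hr.2).trans_eq sqrt_one
  have hsubst := integral_image_eq_integral_abs_deriv_smul
    (measurableSet_Ioo (a := (0 : ℝ)) (b := 1))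
    (fun s _ => (hasDerivAt_pow 2 s).hasDerivWithinAt)
    (fun s hs t ht hst => (pow_left_inj₀ hs.1.le ht.1.le two_ne_zero).1 hst)
    (fun r : ℝ => r ^ (a - 1) * (1 - r) ^ (b - 1))
  rw [himage, integral_rpow_mul_one_sub_rpow ha hb] at hsubst
  rw [mul_comm 2 (Gamma (a + b)), ← div_div, hsubst, eq_div_iff two_ne_zero, ← integral_mul_const]
  refine setIntegral_congr_fun measurableSet_Ioo fun s hs => ?_
  have hs0 : 0 < s := hs.1
  have hpow : s ^ (2 * a - 1) = s * (s ^ 2) ^ (a - 1) := by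
    rw [← rpow_natCast s 2, ← rpow_mul hs0.le, mul_comm s, ← rpow_add_one hs0.ne']
    congr 1
    push_cast
    ring
  simp only [Nat.cast_ofNat, Nat.add_one_sub_one, pow_one, smul_eq_mul]
  rw [abs_of_pos (by positivity), hpow]
  ring

lemma integral_pow_mul_one_sub_sq_rpow {b : ℝ} (hb : 0 < b) (k : ℕ) :
    ∫ s in Ioo (0 : ℝ) 1, s ^ (2 * k) * (1 - s ^ 2) ^ (b - 1) =
      Gamma (k + 1 / 2) * Gamma b / (2 * Gamma (k + 1 / 2 + b)) := by
  rw [← integral_rpow_mul_one_sub_sq_rpow (by positivity) hb,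
    show 2 * ((k : ℝ) + 1 / 2) - 1 = (2 * k : ℕ) by push_cast; ring]
  simp only [rpow_natCast]

lemma integrableOn_one_sub_sq_rpow {b : ℝ} (hb : 0 < b) :
    IntegrableOn (fun s : ℝ => (1 - s ^ 2) ^ (b - 1)) (Ioo 0 1) := by
  refine not_imp_comm.1 integral_undef ?_
  have h := integral_pow_mul_one_sub_sq_rpow hb 0
  simp only [mul_zero, pow_zero, one_mul] at h
  rw [h]
  have := Gamma_pos_of_pos hb
  positivity

lemma hasSum_integral_cosh_mul {w : ℝ → ℝ} (hw : IntegrableOn w (Ioo 0 1)) (z : ℝ) :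
    HasSum (fun k : ℕ => z ^ (2 * k) / (2 * k).factorial * ∫ s in Ioo (0 : ℝ) 1, s ^ (2 * k) * w s)
      (∫ s in Ioo (0 : ℝ) 1, cosh (z * s) * w s) := by
  have hbound (k : ℕ) : ∀ s ∈ Ioo (0 : ℝ) 1, ‖s ^ (2 * k) * w s‖ ≤ ‖w s‖ := fun s hs => by
    rw [norm_mul, norm_pow, norm_of_nonneg hs.1.le]
    exact mul_le_of_le_one_left (norm_nonneg _) (pow_le_one₀ hs.1.le hs.2.le)
  have hintg (k : ℕ) : IntegrableOn (fun s => s ^ (2 * k) * w s) (Ioo 0 1) :=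
    hw.norm.mono' ((by fun_prop : Measurable fun s : ℝ => s ^ (2 * k)).aestronglyMeasurable.mul
      hw.aestronglyMeasurable) (ae_restrict_of_forall_mem measurableSet_Ioo (hbound k))
  have hsum : Summable fun k : ℕ =>
      ∫ s in Ioo (0 : ℝ) 1, ‖z ^ (2 * k) / (2 * k).factorial * (s ^ (2 * k) * w s)‖ := by
    refine Summable.of_nonneg_of_le (fun k => integral_nonneg fun s => norm_nonneg _) (fun k => ?_)
      ((hasSum_cosh z).mul_right (∫ s in Ioo (0 : ℝ) 1, ‖w s‖)).summable
    have hcoeff : ‖z ^ (2 * k) / (2 * k).factorial‖ = z ^ (2 * k) / (2 * k).factorial :=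
      norm_of_nonneg (div_nonneg ((even_two_mul k).pow_nonneg z) (Nat.cast_nonneg _))
    simp only [norm_mul _ (_ * w _), hcoeff, integral_const_mul]
    refine mul_le_mul_of_nonneg_left ?_ (hcoeff ▸ norm_nonneg _)
    exact setIntegral_mono_on (hintg k).norm hw.norm measurableSet_Ioo (hbound k)
  have h := hasSum_integral_of_summable_integral_norm (fun k => (hintg k).const_mul _) hsum
  simp only [integral_const_mul] at h
  convert! h using 1
  refine setIntegral_congr_fun measurableSet_Ioo fun s _ => ?_
  rw [← ((hasSum_cosh (z * s)).mul_right (w s)).tsum_eq]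
  refine tsum_congr fun k => ?_
  rw [mul_pow]
  ring

lemma Gamma_nat_add_half_eq_factorial (k : ℕ) :
    Gamma (k + 1 / 2) = (2 * k).factorial * √π / (2 ^ (2 * k) * k.factorial) := by
  have h := Gamma_mul_Gamma_add_half ((k : ℝ) + 1 / 2)
  rw [show (k : ℝ) + 1 / 2 + 1 / 2 = k + 1 by ring,
    show 2 * ((k : ℝ) + 1 / 2) = ((2 * k : ℕ) : ℝ) + 1 by push_cast; ring,
    Gamma_nat_eq_factorial, Gamma_nat_eq_factorial, sub_add_cancel_right, rpow_neg two_pos.le,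
    rpow_natCast] at h
  calc Gamma (k + 1 / 2) = Gamma (k + 1 / 2) * k.factorial / k.factorial := by field_simp
    _ = (2 * k).factorial * √π / (2 ^ (2 * k) * k.factorial) := by
      rw [h]
      field_simp

theorem besselI_eq_integral_cosh {ν z : ℝ} (hν : -(1 / 2) < ν) (hz : 0 < z) :
    besselI ν z = (z / 2) ^ ν * (2 / (√π * Gamma (ν + 1 / 2))) *
      ∫ s in Ioo (0 : ℝ) 1, cosh (z * s) * (1 - s ^ 2) ^ (ν + 1 / 2 - 1) := by
  have hν' : 0 < ν + 1 / 2 := by linarith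
  rw [← ((hasSum_integral_cosh_mul (integrableOn_one_sub_sq_rpow hν') z).mul_left _).tsum_eq,
    besselI]
  refine tsum_congr fun k => ?_
  have hpow : (z / 2) ^ (2 * (k : ℝ) + ν) = z ^ (2 * k) / 2 ^ (2 * k) * (z / 2) ^ ν := by
    rw [rpow_add (by positivity), ← div_pow, ← rpow_natCast]
    push_cast
    rfl
  have hΓ := Gamma_pos_of_pos hν'
  have hΓk := Gamma_pos_of_pos (show 0 < (k : ℝ) + ν + 1 by linarith [k.cast_nonneg (α := ℝ)])
  have : 0 < √π := by positivity
  rw [integral_pow_mul_one_sub_sq_rpow hν', Gamma_nat_add_half_eq_factorial, hpow,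
    show (k : ℝ) + 1 / 2 + (ν + 1 / 2) = k + ν + 1 by ring]
  generalize Gamma (ν + 1 / 2) = G at hΓ ⊢
  field_simp

end PoissonIntegral

section LaplaceTransform

lemma integrableOn_rpow_mul_exp_neg_mul {a z : ℝ} (ha : 0 < a) (hz : 0 < z) :
    IntegrableOn (fun u : ℝ => u ^ (a - 1) * exp (-(z * u))) (Ioi 0) := by
  refine not_imp_comm.1 integral_undef ?_
  rw [integral_rpow_mul_exp_neg_mul_Ioi ha hz]
  have := Gamma_pos_of_pos ha
  positivity

/-- Watson's lemma to first order. -/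
lemma abs_integral_rpow_mul_exp_neg_mul_sub_le {a s l m z A : ℝ} {g : ℝ → ℝ} (ha : 0 < a)
    (has : 0 < a + s) (hz : 0 < z) (hg : AEStronglyMeasurable g (volume.restrict (Ioi 0)))
    (hgA : ∀ u, 0 < u → |g u - A| ≤ l * u ^ s + m) :
    |(∫ u in Ioi (0 : ℝ), u ^ (a - 1) * exp (-(z * u)) * g u) - (1 / z) ^ a * Gamma a * A| ≤
      l * ((1 / z) ^ (a + s) * Gamma (a + s)) + m * ((1 / z) ^ a * Gamma a) := by
  have hinta := integrableOn_rpow_mul_exp_neg_mul ha hz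
  have hints := integrableOn_rpow_mul_exp_neg_mul has hz
  have hdom := (hints.const_mul l).add (hinta.const_mul m)
  have hbound : ∀ᵐ u ∂volume.restrict (Ioi 0), ‖u ^ (a - 1) * exp (-(z * u)) * (g u - A)‖ ≤
      l * (u ^ (a + s - 1) * exp (-(z * u))) + m * (u ^ (a - 1) * exp (-(z * u))) := by
    refine ae_restrict_of_forall_mem measurableSet_Ioi fun u (hu : 0 < u) => ?_
    rw [norm_mul, norm_of_nonneg (by positivity), norm_eq_abs]
    refine (mul_le_mul_of_nonneg_left (hgA u hu) (by positivity)).trans_eq ?_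
    rw [add_sub_right_comm, rpow_add hu]
    ring
  have hdiff : IntegrableOn (fun u => u ^ (a - 1) * exp (-(z * u)) * (g u - A)) (Ioi 0) :=
    hdom.mono' (hinta.aestronglyMeasurable.mul (hg.sub aestronglyMeasurable_const)) hbound
  have hsplit : ∫ u in Ioi (0 : ℝ), u ^ (a - 1) * exp (-(z * u)) * g u =
      (∫ u in Ioi (0 : ℝ), u ^ (a - 1) * exp (-(z * u)) * (g u - A)) +
        (1 / z) ^ a * Gamma a * A := by
    rw [← integral_rpow_mul_exp_neg_mul_Ioi ha hz, ← integral_mul_const,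
      ← integral_add hdiff (hinta.mul_const A)]
    simp only [mul_sub, sub_add_cancel]
  rw [hsplit, add_sub_cancel_right, ← integral_rpow_mul_exp_neg_mul_Ioi ha hz,
    ← integral_rpow_mul_exp_neg_mul_Ioi has hz, ← integral_const_mul, ← integral_const_mul,
    ← integral_add (hints.const_mul l) (hinta.const_mul m)]
  exact norm_integral_le_of_norm_le hdom hbound

end LaplaceTransform

section ScaledBessel

/-- The exponentially scaled Bessel function `√z e^{-z} I_ν(z)`, which is bounded on `(0, ∞)` and
has a limit at infinity. -/
def scaledBesselI (ν z : ℝ) : ℝ := √z * exp (-z) * besselI ν z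

@[fun_prop]
lemma measurable_scaledBesselI (ν : ℝ) : Measurable (scaledBesselI ν) := by
  unfold scaledBesselI besselI
  fun_prop

/-- The density `G_z` in the Laplace representation
`√z e^{-z} I_ν(z) = c z^(b+1) ∫₀^∞ u^b e^{-zu} G_z(u) du`, `b = ν - 1/2`. -/
def besselLaplaceDensity (b z : ℝ) : ℝ → ℝ :=
  (Ioo 0 1).indicator fun u => (1 + exp (-(2 * z * (1 - u)))) * (2 - u) ^ b

@[fun_prop]
lemma measurable_besselLaplaceDensity (b z : ℝ) : Measurable (besselLaplaceDensity b z) :=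
  Measurable.indicator (by fun_prop) measurableSet_Ioo

lemma integral_Ioo_zero_one_comp_one_sub (f : ℝ → ℝ) :
    ∫ u in Ioo (0 : ℝ) 1, f (1 - u) = ∫ s in Ioo (0 : ℝ) 1, f s := by
  simpa [intervalIntegral.integral_of_le, integral_Ioc_eq_integral_Ioo] using
    intervalIntegral.integral_comp_sub_left f (a := 0) (b := 1) 1

lemma scaledBesselI_eq_integral_besselLaplaceDensity {ν z : ℝ} (hν : -(1 / 2) < ν) (hz : 0 < z) :
    scaledBesselI ν z = 2 ^ (-ν) / (√π * Gamma (ν + 1 / 2)) * z ^ (ν + 1 / 2) *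
      ∫ u in Ioi (0 : ℝ), u ^ (ν + 1 / 2 - 1) * exp (-(z * u)) *
        besselLaplaceDensity (ν + 1 / 2 - 1) z u := by
  have hsubst : ∫ u in Ioi (0 : ℝ), u ^ (ν + 1 / 2 - 1) * exp (-(z * u)) *
        besselLaplaceDensity (ν + 1 / 2 - 1) z u =
      2 * exp (-z) * ∫ s in Ioo (0 : ℝ) 1, cosh (z * s) * (1 - s ^ 2) ^ (ν + 1 / 2 - 1) := by
    rw [setIntegral_eq_of_subset_of_forall_sdiff_eq_zero measurableSet_Ioi
        Ioo_subset_Ioi_self fun u hu => by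
          rw [besselLaplaceDensity, indicator_of_notMem hu.2, mul_zero],
      ← integral_Ioo_zero_one_comp_one_sub fun s => cosh (z * s) * _, ← integral_const_mul]
    refine setIntegral_congr_fun measurableSet_Ioo fun u hu => ?_
    have hfactor : 1 - (1 - u) ^ 2 = u * (2 - u) := by ring
    have hexp₁ : exp (-(z * u)) = exp (-z) * exp (z * (1 - u)) := by
      rw [← exp_add]
      ring_nf
    have hexp₂ : exp (-(2 * z * (1 - u))) = exp (-(z * (1 - u))) / exp (z * (1 - u)) := by
      rw [← exp_sub]
      ring_nf
    have hu2 : 0 ≤ 2 - u := by linarith [hu.2]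
    simp only [besselLaplaceDensity, indicator_of_mem hu, hfactor, mul_rpow hu.1.le hu2, hexp₁,
      hexp₂, cosh_eq]
    field_simp
  have hpow : z ^ (ν + 1 / 2) = √z * z ^ ν := by
    rw [add_comm, rpow_add hz, sqrt_eq_rpow]
  rw [scaledBesselI, besselI_eq_integral_cosh hν hz, hsubst, hpow, div_rpow hz.le two_pos.le,
    rpow_neg two_pos.le]
  ring

lemma exists_abs_two_sub_rpow_sub_le (b : ℝ) :
    ∃ l : ℝ, 0 ≤ l ∧ ∀ u ∈ Icc (0 : ℝ) 1, |(2 - u) ^ b - 2 ^ b| ≤ l * u := by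
  have hsmooth : ContDiffOn ℝ 1 (fun u : ℝ => (2 - u) ^ b) (Icc 0 1) := fun u hu =>
    ((contDiff_const.sub contDiff_id).contDiffAt.rpow_const_of_ne
      (by simp only [id_eq]; linarith [hu.2])).contDiffWithinAt
  obtain ⟨l, hl⟩ := hsmooth.exists_lipschitzOnWith one_ne_zero (convex_Icc 0 1) isCompact_Icc
  refine ⟨l, l.2, fun u hu => ?_⟩
  have h := hl.dist_le_mul u hu 0 (left_mem_Icc.2 zero_le_one)
  rwa [dist_zero_right, norm_of_nonneg hu.1, sub_zero] at h

lemma exp_neg_two_mul_mul_one_sub_le {z u : ℝ} (hz : 0 < z) (hu : u ∈ Icc (0 : ℝ) 1) :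
    exp (-(2 * z * (1 - u))) ≤ 2 * u + 1 / z := by
  rcases le_total (1 / 2) u with hhalf | hhalf
  · calc exp (-(2 * z * (1 - u))) ≤ 1 :=
          exp_le_one_iff.2 (neg_nonpos.2 (mul_nonneg (by positivity) (sub_nonneg.2 hu.2)))
      _ ≤ 2 * u := by linarith
      _ ≤ 2 * u + 1 / z := le_add_of_nonneg_right (by positivity)
  · calc exp (-(2 * z * (1 - u))) ≤ exp (-z) := exp_le_exp.2 (by nlinarith)
      _ ≤ 1 / z := by
        rw [exp_neg, ← one_div]
        exact one_div_le_one_div_of_le hz (by linarith [add_one_le_exp z])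
      _ ≤ 2 * u + 1 / z := le_add_of_nonneg_left (by linarith [hu.1])

lemma exists_abs_besselLaplaceDensity_le (b : ℝ) :
    ∃ l : ℝ, ∀ z u : ℝ, 0 < z → 0 < u → |besselLaplaceDensity b z u| ≤ l ∧
      |besselLaplaceDensity b z u - 2 ^ b| ≤ l * u + l / z := by
  obtain ⟨l, hl, hlip⟩ := exists_abs_two_sub_rpow_sub_le b
  set A : ℝ := 2 ^ b
  have hA : 0 < A := by positivity
  refine ⟨3 * (A + l), fun z u hz hu => ?_⟩
  rw [besselLaplaceDensity]
  by_cases hu1 : u ∈ Ioo (0 : ℝ) 1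
  · have hIcc := Ioo_subset_Icc_self hu1
    set e : ℝ := exp (-(2 * z * (1 - u)))
    have he1 : e ≤ 1 :=
      exp_le_one_iff.2 (neg_nonpos.2 (mul_nonneg (by positivity) (sub_nonneg.2 hIcc.2)))
    have hpow := abs_sub_le_iff.1 (hlip u hIcc)
    have habs : |(2 - u) ^ b| ≤ A + l := abs_le.2 (by constructor <;> nlinarith [hu1.2])
    have hsecond : |e * (2 - u) ^ b| ≤ e * (A + l) := by
      rw [abs_mul, abs_of_pos (exp_pos _)]
      gcongr
    rw [indicator_of_mem hu1, one_add_mul]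
    constructor
    · calc |(2 - u) ^ b + e * (2 - u) ^ b| ≤ (A + l) + e * (A + l) :=
            (abs_add_le _ _).trans (add_le_add habs hsecond)
        _ ≤ 3 * (A + l) := by nlinarith
    · calc |(2 - u) ^ b + e * (2 - u) ^ b - A| ≤ l * u + e * (A + l) := by
            rw [add_sub_right_comm]
            exact (abs_add_le _ _).trans (add_le_add (hlip u hIcc) hsecond)
        _ ≤ l * u + (2 * u + 1 / z) * (A + l) := by
            gcongr
            exact exp_neg_two_mul_mul_one_sub_le hz hIcc
        _ ≤ 3 * (A + l) * u + 3 * (A + l) / z := by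
            have : 0 ≤ A * u + 2 * (A + l) / z := by positivity
            linear_combination this
  · have hu1' : 1 ≤ u := not_lt.1 fun h => hu1 ⟨hu, h⟩
    rw [indicator_of_notMem hu1, abs_zero, zero_sub, abs_neg, abs_of_pos hA]
    have : 0 ≤ 3 * (A + l) / z := by positivity
    exact ⟨by positivity, by nlinarith⟩

lemma abs_scaledBesselI_sub_le {ν s l m z A : ℝ} (hν : -(1 / 2) < ν) (hνs : 0 < ν + 1 / 2 + s)
    (hz : 0 < z)
    (h : ∀ u, 0 < u → |besselLaplaceDensity (ν + 1 / 2 - 1) z u - A| ≤ l * u ^ s + m) :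
    |scaledBesselI ν z - 2 ^ (-ν) / √π * A| ≤
      2 ^ (-ν) / √π * (l * (Gamma (ν + 1 / 2 + s) / Gamma (ν + 1 / 2)) * (1 / z) ^ s + m) := by
  have hν' : 0 < ν + 1 / 2 := by linarith
  have hwatson := abs_integral_rpow_mul_exp_neg_mul_sub_le hν' hνs hz (by fun_prop) h
  rw [scaledBesselI_eq_integral_besselLaplaceDensity hν hz]
  generalize ∫ u in Ioi (0 : ℝ), u ^ (ν + 1 / 2 - 1) * exp (-(z * u)) *
    besselLaplaceDensity (ν + 1 / 2 - 1) z u = J at hwatson ⊢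
  have hΓ := Gamma_pos_of_pos hν'
  have hinv : z ^ (ν + 1 / 2) = ((1 / z) ^ (ν + 1 / 2))⁻¹ := by
    rw [one_div z, inv_rpow hz.le, inv_inv]
  rw [rpow_add (z := s) (by positivity)] at hwatson
  rw [hinv]
  have hw : 0 < (1 / z) ^ (ν + 1 / 2) := by positivity
  generalize (1 / z) ^ (ν + 1 / 2) = w at hw hwatson ⊢
  generalize Gamma (ν + 1 / 2) = G at hΓ hwatson ⊢
  calc |2 ^ (-ν) / (√π * G) * w⁻¹ * J - 2 ^ (-ν) / √π * A|
      = |2 ^ (-ν) / (√π * G) * w⁻¹ * (J - w * G * A)| := by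
        congr 1
        field_simp
    _ = 2 ^ (-ν) / (√π * G) * w⁻¹ * |J - w * G * A| := by
        rw [abs_mul, abs_of_pos (by positivity)]
    _ ≤ 2 ^ (-ν) / (√π * G) * w⁻¹ *
        (l * (w * (1 / z) ^ s * Gamma (ν + 1 / 2 + s)) + m * (w * G)) := by gcongr
    _ = 2 ^ (-ν) / √π * (l * (Gamma (ν + 1 / 2 + s) / G) * (1 / z) ^ s + m) := by field_simp

lemma exists_abs_scaledBesselI_sub_le_div {ν : ℝ} (hν : -(1 / 2) < ν) :
    ∃ M L : ℝ, ∀ z, 0 < z → |scaledBesselI ν z| ≤ M ∧ |scaledBesselI ν z - L| ≤ M / z := by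
  have hν' : 0 < ν + 1 / 2 := by linarith
  obtain ⟨l, hl⟩ := exists_abs_besselLaplaceDensity_le (ν + 1 / 2 - 1)
  have hl0 : 0 ≤ l := (abs_nonneg _).trans (hl 1 1 one_pos one_pos).1
  set ρ : ℝ := Gamma (ν + 1 / 2 + 1) / Gamma (ν + 1 / 2)
  have hρ : 0 < ρ := div_pos (Gamma_pos_of_pos (by linarith)) (Gamma_pos_of_pos hν')
  refine ⟨2 ^ (-ν) / √π * (l * (ρ + 1)), 2 ^ (-ν) / √π * 2 ^ (ν + 1 / 2 - 1),
    fun z hz => ⟨?_, ?_⟩⟩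
  · have hbound := abs_scaledBesselI_sub_le (s := 0) (l := 0) (m := l) (A := 0) hν (by linarith) hz
      fun u hu => by simpa using (hl z u hz hu).1
    rw [mul_zero, sub_zero, zero_mul, zero_mul, zero_add] at hbound
    refine hbound.trans ?_
    gcongr
    exact le_mul_of_one_le_right hl0 (by linarith)
  · refine (abs_scaledBesselI_sub_le (s := 1) hν (by linarith) hz fun u hu => by
      simpa using (hl z u hz hu).2).trans_eq ?_
    rw [rpow_one]
    ring

lemma exists_abs_scaledBesselI_sub_le_rpow {ν σ : ℝ} (hν : -(1 / 2) < ν) (hσ0 : 0 ≤ σ)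
    (hσ1 : σ ≤ 1) : ∃ M L : ℝ, ∀ z, 0 < z →
      |scaledBesselI ν z| ≤ M ∧ |scaledBesselI ν z - L| ≤ M * z ^ (-σ) := by
  obtain ⟨M, L, h⟩ := exists_abs_scaledBesselI_sub_le_div hν
  refine ⟨M + |L|, L, fun z hz => ⟨(h z hz).1.trans (le_add_of_nonneg_right (abs_nonneg L)), ?_⟩⟩
  have hM : 0 ≤ M := (abs_nonneg _).trans (h z hz).1
  rcases le_total z 1 with hz1 | hz1
  · calc |scaledBesselI ν z - L| ≤ M + |L| :=
          (abs_sub _ _).trans (add_le_add_left (h z hz).1 _)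
      _ ≤ (M + |L|) * z ^ (-σ) :=
          le_mul_of_one_le_right (by positivity)
            (one_le_rpow_of_pos_of_le_one_of_nonpos hz hz1 (neg_nonpos.2 hσ0))
  · calc |scaledBesselI ν z - L| ≤ M * z ^ (-1 : ℝ) := by
          rw [rpow_neg_one, ← div_eq_mul_inv]
          exact (h z hz).2
      _ ≤ (M + |L|) * z ^ (-σ) := by
          gcongr
          exact le_add_of_nonneg_right (abs_nonneg L)

end ScaledBessel

section FractionalKernel

lemma besselHeatKernel_eq_scaledBesselI {lam t x y : ℝ} (ht : 0 < t) :
    besselHeatKernel lam t x y =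
      (√(2 * t))⁻¹ * scaledBesselI (lam - 1 / 2) (x * y / (2 * t)) *
        exp (-((x - y) ^ 2 / (4 * t))) := by
  have hsqrt : √(x * y) / (2 * t) = (√(2 * t))⁻¹ * √(x * y / (2 * t)) := by
    rw [sqrt_div' _ (by positivity), inv_mul_eq_div, div_div, mul_self_sqrt (by positivity)]
  have hexp : exp (-(x ^ 2 + y ^ 2) / (4 * t)) =
      exp (-(x * y / (2 * t))) * exp (-((x - y) ^ 2 / (4 * t))) := by
    rw [← exp_add]
    congr 1
    field_simp
    ring
  rw [besselHeatKernel, hsqrt, hexp, scaledBesselI]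
  ring

lemma fracKernelK_eq_integral_scaledBesselI (lam σ x y : ℝ) :
    fracKernelK lam σ x y = 1 / (-gammaNeg σ) * (√2)⁻¹ *
      ∫ v in Ioi (0 : ℝ), v ^ (σ + 1 / 2 - 1) * exp (-((x - y) ^ 2 / 4 * v)) *
        scaledBesselI (lam - 1 / 2) (x * y / 2 * v) := by
  rw [fracKernelK, mul_assoc, ← integral_const_mul (√2)⁻¹,
    ← integral_comp_rpow_Ioi (fun t => besselHeatKernel lam t x y * t ^ (-1 - σ))
      (neg_ne_zero.2 one_ne_zero)]
  congr 1
  refine setIntegral_congr_fun measurableSet_Ioi fun v (hv : 0 < v) => ?_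
  have hpow : v ^ (σ + 1 / 2 - 1) = v ^ (-1 - 1 : ℝ) * √v * (v ^ (-1 : ℝ)) ^ (-1 - σ) := by
    rw [sqrt_eq_rpow, ← rpow_mul hv.le, ← rpow_add hv, ← rpow_add hv]
    congr 1
    ring
  simp only [smul_eq_mul, abs_neg, abs_one, one_mul, hpow]
  rw [besselHeatKernel_eq_scaledBesselI (by positivity), rpow_neg_one, sqrt_mul two_pos.le,
    sqrt_inv, mul_inv, inv_inv, div_mul_eq_div_div, div_inv_eq_mul, div_mul_eq_div_div,
    div_inv_eq_mul]
  ring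

lemma measurable_fracKernelK (lam σ x : ℝ) : Measurable (fracKernelK lam σ x) := by
  have hW : Measurable fun p : ℝ × ℝ => besselHeatKernel lam p.2 x p.1 * p.2 ^ (-1 - σ) := by
    unfold besselHeatKernel besselI
    fun_prop
  exact hW.stronglyMeasurable.integral_prod_right'.measurable.const_mul _

lemma one_div_sq_div_four_rpow (a w : ℝ) :
    (1 / (w ^ 2 / 4)) ^ a = 4 ^ a * |w| ^ (-(2 * a)) := by
  rw [← sq_abs w, one_div_div, div_rpow (by positivity) (by positivity), rpow_neg (abs_nonneg w),
    rpow_mul (abs_nonneg w), rpow_two, div_eq_mul_inv]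

lemma exists_abs_fracKernelK_le {lam σ : ℝ} (hlam : 0 < lam) (hσ : -(1 / 2) < σ) :
    ∃ A : ℝ, 0 ≤ A ∧ ∀ x y : ℝ, 0 < x → 0 < y → x ≠ y →
      |fracKernelK lam σ x y| ≤ A * |x - y| ^ (-1 - 2 * σ) := by
  obtain ⟨M, L, hM⟩ := exists_abs_scaledBesselI_sub_le_div (ν := lam - 1 / 2) (by linarith)
  have hM0 : 0 ≤ M := (abs_nonneg _).trans (hM 1 one_pos).1
  have hΓ := Gamma_pos_of_pos (show 0 < σ + 1 / 2 by linarith)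
  refine ⟨|1 / (-gammaNeg σ) * (√2)⁻¹| * (M * (4 ^ (σ + 1 / 2) * Gamma (σ + 1 / 2))),
    by positivity, fun x y hx hy hxy => ?_⟩
  have : x - y ≠ 0 := sub_ne_zero.2 hxy
  have hwatson := abs_integral_rpow_mul_exp_neg_mul_sub_le (a := σ + 1 / 2) (s := 0) (l := 0)
    (A := 0) (m := M) (z := (x - y) ^ 2 / 4)
    (g := fun v => scaledBesselI (lam - 1 / 2) (x * y / 2 * v)) (by linarith) (by linarith)
    (by positivity) (Measurable.aestronglyMeasurable (by fun_prop))
    fun v hv => by simpa using (hM (x * y / 2 * v) (by positivity)).1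
  rw [mul_zero, sub_zero, zero_mul, zero_add, one_div_sq_div_four_rpow] at hwatson
  rw [fracKernelK_eq_integral_scaledBesselI, abs_mul]
  refine (mul_le_mul_of_nonneg_left hwatson (abs_nonneg _)).trans_eq ?_
  ring_nf

lemma exists_abs_fracKernelK_sub_le {lam σ : ℝ} (hlam : 0 < lam) (hσ0 : 0 ≤ σ) (hσ1 : σ ≤ 1) :
    ∃ κ B : ℝ, 0 ≤ B ∧ ∀ x y : ℝ, 0 < x → 0 < y → x ≠ y →
      |fracKernelK lam σ x y - κ * |x - y| ^ (-1 - 2 * σ)| ≤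
        B * (x * y) ^ (-σ) * |x - y|⁻¹ := by
  obtain ⟨P, L, hP⟩ :=
    exists_abs_scaledBesselI_sub_le_rpow (ν := lam - 1 / 2) (by linarith) hσ0 hσ1
  have hP0 : 0 ≤ P := (abs_nonneg _).trans (hP 1 one_pos).1
  set c : ℝ := 1 / (-gammaNeg σ) * (√2)⁻¹
  refine ⟨c * (L * (4 ^ (σ + 1 / 2) * Gamma (σ + 1 / 2))),
    |c| * (P * 2 ^ σ * (4 ^ (1 / 2 : ℝ) * Gamma (1 / 2))), by positivity, fun x y hx hy hxy => ?_⟩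
  have : x - y ≠ 0 := sub_ne_zero.2 hxy
  have hwatson := abs_integral_rpow_mul_exp_neg_mul_sub_le (a := σ + 1 / 2) (s := -σ)
    (l := P * (x * y / 2) ^ (-σ)) (A := L) (m := 0) (z := (x - y) ^ 2 / 4)
    (g := fun v => scaledBesselI (lam - 1 / 2) (x * y / 2 * v)) (by linarith) (by linarith)
    (by positivity) (Measurable.aestronglyMeasurable (by fun_prop)) fun v hv => by
      rw [add_zero, mul_assoc, ← mul_rpow (by positivity) hv.le]
      exact (hP (x * y / 2 * v) (by positivity)).2
  rw [add_neg_cancel_comm, one_div_sq_div_four_rpow, one_div_sq_div_four_rpow, zero_mul,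
    add_zero, show -(2 * (σ + 1 / 2)) = -1 - 2 * σ by ring, show -(2 * (1 / 2 : ℝ)) = -1 by ring,
    rpow_neg_one] at hwatson
  have hxy2 : (x * y / 2) ^ (-σ) = (x * y) ^ (-σ) * 2 ^ σ := by
    rw [div_rpow (by positivity) two_pos.le, rpow_neg two_pos.le, div_inv_eq_mul]
  calc |fracKernelK lam σ x y - c * (L * (4 ^ (σ + 1 / 2) * Gamma (σ + 1 / 2))) *
        |x - y| ^ (-1 - 2 * σ)|
      = |c| * _ := by
        rw [fracKernelK_eq_integral_scaledBesselI, ← abs_mul, mul_sub]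
        congr 2
        ring
    _ ≤ |c| * _ := mul_le_mul_of_nonneg_left hwatson (abs_nonneg c)
    _ = _ := by
        rw [hxy2]
        ring

end FractionalKernel

section PrincipalValue

lemma integral_eq_zero_of_comp_sub_left_eq_neg {c : ℝ} {q : ℝ → ℝ} (hq : ∀ y, q (c - y) = -q y) :
    ∫ y, q y = 0 := by
  have h := integral_sub_left_eq_self q volume c
  simp only [hq, integral_neg] at h
  linarith

lemma aecover_le_abs_sub (x : ℝ) (μ : Measure ℝ) [NullSingletonClass μ] :
    AECover μ (nhdsWithin 0 (Ioi 0)) fun ε : ℝ => {y | ε ≤ |x - y|} where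
  ae_eventually_mem := by
    filter_upwards [Measure.ae_ne μ x] with y hy
    exact mem_nhdsWithin_of_mem_nhds (Iic_mem_nhds (abs_pos.2 (sub_ne_zero.2 hy.symm)))
  measurableSet ε := measurableSet_le measurable_const (by fun_prop)

lemma tendsto_setIntegral_le_abs_sub {s : Set ℝ} {f q : ℝ → ℝ} {x : ℝ} (hs : MeasurableSet s)
    (hodd : ∀ y, q (2 * x - y) = -q y) (hqs : Function.support q ⊆ s)
    (hq : ∀ ε, 0 < ε → IntegrableOn q {y | ε ≤ |x - y|})
    (hfq : IntegrableOn (fun y => f y - q y) s) :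
    Tendsto (fun ε => ∫ y in s ∩ {y | ε ≤ |x - y|}, f y) (nhdsWithin 0 (Ioi 0))
      (nhds (∫ y in s, (f y - q y))) := by
  have hcover := aecover_le_abs_sub x (volume.restrict s)
  refine (hcover.integral_tendsto_of_countably_generated hfq).congr' ?_
  filter_upwards [self_mem_nhdsWithin] with ε (hε : 0 < ε)
  have hE : MeasurableSet {y | ε ≤ |x - y|} := hcover.measurableSet ε
  have hcancel : ∫ y in s ∩ {y | ε ≤ |x - y|}, q y = 0 := by
    rw [inter_comm, ← setIntegral_indicator hs, indicator_eq_self.2 hqs, ← integral_indicator hE]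
    refine integral_eq_zero_of_comp_sub_left_eq_neg (c := 2 * x) fun y => ?_
    have hmem : 2 * x - y ∈ {y | ε ≤ |x - y|} ↔ y ∈ {y | ε ≤ |x - y|} := by
      rw [mem_ofPred_eq, mem_ofPred_eq, ← abs_neg]
      ring_nf
    simp only [indicator, hmem, hodd]
    split_ifs <;> simp
  have hq' := (hq ε hε).mono_set (s := s ∩ {y | ε ≤ |x - y|}) inter_subset_right
  rw [Measure.restrict_restrict hE, inter_comm,
    ← add_zero (∫ y in _, (f y - q y)), ← hcancel,
    ← integral_add (hfq.mono_set inter_subset_left) hq']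
  simp only [sub_add_cancel]

lemma setIntegral_closedBall_comp_abs_sub {R : ℝ} (hR : 0 ≤ R) (x : ℝ) (H : ℝ → ℝ) :
    ∫ y in Metric.closedBall x R, H |x - y| = 2 * ∫ r in 0..R, H r := by
  have hind : (Metric.closedBall x R).indicator (fun y => H |x - y|) =
      fun y => (Iic R).indicator H |x - y| := by
    ext y
    simp only [indicator, Metric.mem_closedBall', dist_eq, mem_Iic]
  rw [← integral_indicator Metric.isClosed_closedBall.measurableSet, hind,
    integral_sub_left_eq_self (fun y => (Iic R).indicator H |y|), integral_comp_abs,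
    setIntegral_indicator measurableSet_Iic, Ioi_inter_Iic,
    intervalIntegral.integral_of_le hR]

end PrincipalValue

section PrincipalValueEstimate

/-- The odd singular part `κ |x - y|^{-1-2σ} (x - y)` of `K_σ^λ(x, y) (x - y)`, cut off to an
interval centred at `x` which stays inside `{y > 0, |x - y| ≤ 1}` and on which `y` is comparable
to `x`. -/
def localOddPart (κ σ x : ℝ) : ℝ → ℝ :=
  (Metric.closedBall x (min 1 (x / 2))).indicator
    fun y => κ * |x - y| ^ (-1 - 2 * σ) * (x - y)

lemma mem_closedBall_min_iff {x y : ℝ} :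
    y ∈ Metric.closedBall x (min 1 (x / 2)) ↔ |x - y| ≤ 1 ∧ |x - y| ≤ x / 2 := by
  rw [Metric.mem_closedBall', dist_eq, le_min_iff]

lemma localOddPart_two_mul_sub (κ σ x y : ℝ) :
    localOddPart κ σ x (2 * x - y) = -localOddPart κ σ x y := by
  have habs : |x - (2 * x - y)| = |x - y| := by
    rw [← abs_neg]
    ring_nf
  simp only [localOddPart, indicator, mem_closedBall_min_iff, habs]
  split_ifs
  · ring
  · simp

lemma support_localOddPart_subset {κ σ x : ℝ} (hx : 0 < x) :
    Function.support (localOddPart κ σ x) ⊆ Ioi 0 ∩ Metric.closedBall x 1 := by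
  refine support_indicator_subset.trans fun y hy => ?_
  obtain ⟨hy1, hyx⟩ := mem_closedBall_min_iff.1 hy
  refine ⟨?_, by rwa [Metric.mem_closedBall', dist_eq]⟩
  rw [mem_Ioi]
  linarith [(abs_le.1 hyx).2]

lemma measurable_localOddPart (κ σ x : ℝ) : Measurable (localOddPart κ σ x) :=
  Measurable.indicator (by fun_prop) Metric.isClosed_closedBall.measurableSet

lemma integrableOn_localOddPart (κ σ x : ℝ) {ε : ℝ} (hε : 0 < ε) :
    IntegrableOn (localOddPart κ σ x) {y | ε ≤ |x - y|} := by
  have hE : IsClosed {y : ℝ | ε ≤ |x - y|} := isClosed_le continuous_const (by fun_prop)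
  have hcont : ContinuousOn (fun y => κ * |x - y| ^ (-1 - 2 * σ) * (x - y))
      ({y | ε ≤ |x - y|} ∩ Metric.closedBall x (min 1 (x / 2))) := by
    refine ((continuousOn_const.mul (ContinuousOn.rpow_const (by fun_prop) fun y hy => ?_)).mul
      (by fun_prop))
    exact Or.inl (hε.trans_le hy.1).ne'
  rw [localOddPart, integrableOn_indicator_iff Metric.isClosed_closedBall.measurableSet, inter_comm]
  exact hcont.integrableOn_compact ((isCompact_closedBall _ _).inter_left hE)

lemma rpow_neg_two_mul_le_of_le_three_mul {d w σ : ℝ} (hσ : 0 ≤ σ) (hd : 0 < d) (hdw : d ≤ 3 * w) :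
    w ^ (-(2 * σ)) ≤ 3 ^ (2 * σ) * d ^ (-(2 * σ)) := by
  calc w ^ (-(2 * σ)) ≤ (d / 3) ^ (-(2 * σ)) :=
        rpow_le_rpow_of_nonpos (by positivity) (by linarith) (by linarith)
    _ = 3 ^ (2 * σ) * d ^ (-(2 * σ)) := by
        rw [div_rpow hd.le (by norm_num), rpow_neg (by norm_num : (0 : ℝ) ≤ 3), div_inv_eq_mul,
          mul_comm]

lemma mul_rpow_neg_le_of_abs_sub_le_half {x y σ : ℝ} (hσ : 0 ≤ σ) (hx : 0 < x)
    (hxy : |x - y| ≤ x / 2) :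
    (x * y) ^ (-σ) ≤ 3 ^ (2 * σ) * (x + |x - y|) ^ (-(2 * σ)) := by
  have hy : x / 2 ≤ y := by linarith [(abs_le.1 hxy).2]
  have hprod : 0 ≤ x * y := mul_nonneg hx.le (by linarith)
  have hroot : x + |x - y| ≤ 3 * √(x * y) := by
    refine le_of_sq_le_sq ?_ (by positivity)
    rw [mul_pow, sq_sqrt hprod]
    nlinarith [abs_nonneg (x - y)]
  have hpow : (x * y) ^ (-σ) = √(x * y) ^ (-(2 * σ)) := by
    rw [sqrt_eq_rpow, ← rpow_mul hprod]
    ring_nf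
  rw [hpow]
  exact rpow_neg_two_mul_le_of_le_three_mul hσ (by positivity) hroot

lemma abs_mul_sub_sub_localOddPart_le {A B K κ σ x y : ℝ} (hσ : 0 ≤ σ) (hx : 0 < x)
    (hxy : x ≠ y) (hy1 : |x - y| ≤ 1) (hA : 0 ≤ A) (hB : 0 ≤ B)
    (hK : |K| ≤ A * |x - y| ^ (-1 - 2 * σ))
    (hKκ : |K - κ * |x - y| ^ (-1 - 2 * σ)| ≤ B * (x * y) ^ (-σ) * |x - y|⁻¹) :
    |K * (x - y) - localOddPart κ σ x y| ≤
      (A + B) * 3 ^ (2 * σ) * (x + |x - y|) ^ (-(2 * σ)) := by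
  have hr : 0 < |x - y| := abs_pos.2 (sub_ne_zero.2 hxy)
  have hD : 0 ≤ 3 ^ (2 * σ) * (x + |x - y|) ^ (-(2 * σ)) := by positivity
  rw [mul_assoc, add_mul]
  by_cases hnear : |x - y| ≤ x / 2
  · rw [localOddPart, indicator_of_mem (mem_closedBall_min_iff.2 ⟨hy1, hnear⟩), ← sub_mul, abs_mul]
    calc _ ≤ B * (x * y) ^ (-σ) * |x - y|⁻¹ * |x - y| := by gcongr
      _ = B * (x * y) ^ (-σ) := by rw [mul_assoc, inv_mul_cancel₀ hr.ne', mul_one]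
      _ ≤ B * (3 ^ (2 * σ) * (x + |x - y|) ^ (-(2 * σ))) := by
        gcongr
        exact mul_rpow_neg_le_of_abs_sub_le_half hσ hx hnear
      _ ≤ _ := le_add_of_nonneg_left (mul_nonneg hA hD)
  · rw [localOddPart, indicator_of_notMem fun h => hnear (mem_closedBall_min_iff.1 h).2, sub_zero,
      abs_mul]
    calc _ ≤ A * |x - y| ^ (-1 - 2 * σ) * |x - y| := by gcongr
      _ = A * |x - y| ^ (-(2 * σ)) := by
        rw [mul_assoc, ← rpow_add_one hr.ne']
        ring_nf
      _ ≤ A * (3 ^ (2 * σ) * (x + |x - y|) ^ (-(2 * σ))) := by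
        gcongr
        exact rpow_neg_two_mul_le_of_le_three_mul hσ (by positivity) (by linarith)
      _ ≤ _ := le_add_of_nonneg_right (mul_nonneg hB hD)

lemma integrableOn_closedBall_add_abs_sub_rpow (p : ℝ) {x : ℝ} (hx : 0 < x) (R : ℝ) :
    IntegrableOn (fun y => (x + |x - y|) ^ p) (Metric.closedBall x R) :=
  have hcont : Continuous fun y => (x + |x - y|) ^ p :=
    Continuous.rpow_const (by fun_prop) fun _ => Or.inl (by positivity)
  hcont.continuousOn.integrableOn_compact (isCompact_closedBall x R)

lemma setIntegral_add_abs_sub_rpow_le (p : ℝ) {s : Set ℝ} {x R : ℝ} (hx : 0 < x) (hR : 0 ≤ R)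
    (hs : s ⊆ Metric.closedBall x R) :
    ∫ y in s, (x + |x - y|) ^ p ≤ 2 * ∫ t in x..x + R, t ^ p := by
  calc _ ≤ ∫ y in Metric.closedBall x R, (x + |x - y|) ^ p :=
        setIntegral_mono_set (integrableOn_closedBall_add_abs_sub_rpow p hx R)
          (ae_of_all _ fun y => by positivity) hs.eventuallyLE
    _ = 2 * ∫ t in x..x + R, t ^ p := by
      rw [setIntegral_closedBall_comp_abs_sub hR x fun r => (x + r) ^ p,
        intervalIntegral.integral_comp_add_left (fun t => t ^ p) x, add_zero]

theorem exists_tendsto_setIntegral_fracKernelK {lam σ : ℝ} (hlam : 0 < lam) (hσ0 : 0 ≤ σ)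
    (hσ1 : σ ≤ 1) : ∃ D : ℝ, 0 ≤ D ∧ ∀ x : ℝ, 0 < x → ∃ Cx : ℝ,
      Tendsto (fun ε : ℝ =>
          ∫ y in {y : ℝ | 0 < y ∧ ε ≤ |x - y| ∧ |x - y| ≤ 1}, fracKernelK lam σ x y * (x - y))
        (nhdsWithin 0 (Ioi 0)) (nhds Cx) ∧
      |Cx| ≤ D * ∫ t in x..x + 1, t ^ (-(2 * σ)) := by
  obtain ⟨A, hA, hK⟩ := exists_abs_fracKernelK_le (σ := σ) hlam (by linarith)
  obtain ⟨κ, B, hB, hKκ⟩ := exists_abs_fracKernelK_sub_le hlam hσ0 hσ1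
  set D : ℝ := (A + B) * 3 ^ (2 * σ)
  have hD : 0 ≤ D := by positivity
  refine ⟨D * 2, by positivity, fun x hx => ?_⟩
  set s : Set ℝ := Ioi 0 ∩ Metric.closedBall x 1
  have hs : MeasurableSet s := measurableSet_Ioi.inter Metric.isClosed_closedBall.measurableSet
  have hs_eq (ε : ℝ) :
      {y | 0 < y ∧ ε ≤ |x - y| ∧ |x - y| ≤ 1} = s ∩ {y | ε ≤ |x - y|} := by
    ext y
    simp only [s, mem_inter_iff, mem_Ioi, Metric.mem_closedBall', dist_eq, mem_ofPred_eq]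
    tauto
  set g : ℝ → ℝ := fun y => fracKernelK lam σ x y * (x - y) - localOddPart κ σ x y
  have hg : Measurable g :=
    ((measurable_fracKernelK lam σ x).mul (by fun_prop)).sub (measurable_localOddPart κ σ x)
  have hdom : ∀ᵐ y ∂volume.restrict s, ‖g y‖ ≤ D * (x + |x - y|) ^ (-(2 * σ)) := by
    filter_upwards [ae_restrict_mem hs, Measure.ae_ne _ x] with y hy hyx
    have hy1 : |x - y| ≤ 1 := by simpa only [Metric.mem_closedBall', dist_eq] using hy.2
    exact abs_mul_sub_sub_localOddPart_le hσ0 hx hyx.symm hy1 hA hB (hK x y hx hy.1 hyx.symm)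
      (hKκ x y hx hy.1 hyx.symm)
  have hsub : s ⊆ Metric.closedBall x 1 := inter_subset_right
  have hintg : IntegrableOn (fun y => D * (x + |x - y|) ^ (-(2 * σ))) s :=
    ((integrableOn_closedBall_add_abs_sub_rpow _ hx 1).mono_set hsub).const_mul D
  refine ⟨∫ y in s, g y, ?_, ?_⟩
  · simp only [hs_eq]
    exact tendsto_setIntegral_le_abs_sub hs (localOddPart_two_mul_sub κ σ x)
      (support_localOddPart_subset hx) (fun ε => integrableOn_localOddPart κ σ x)
      (hintg.mono' hg.aestronglyMeasurable hdom)
  · refine (norm_integral_le_of_norm_le hintg hdom).trans ?_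
    rw [integral_const_mul, mul_assoc D 2]
    exact mul_le_mul_of_nonneg_left (setIntegral_add_abs_sub_rpow_le _ hx zero_le_one hsub) hD

end PrincipalValueEstimate

section IntegralRpow

lemma integral_rpow_neg_le_of_lt_one {p x R : ℝ} (hp0 : 0 ≤ p) (hp1 : p < 1) (hx : 0 ≤ x)
    (hR : 0 ≤ R) : ∫ t in x..x + R, t ^ (-p) ≤ (1 - p)⁻¹ * R ^ (1 - p) := by
  have hq : 0 < 1 - p := by linarith
  have hsub := rpow_add_le_add_rpow hx hR hq.le (by linarith)
  rw [integral_rpow (Or.inl (by linarith)), neg_add_eq_sub, div_eq_inv_mul]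
  gcongr
  linarith

lemma integral_inv_le_one_add_abs_log {x : ℝ} (hx : 0 < x) :
    ∫ t in x..x + 1, t⁻¹ ≤ 1 + if x < 1 then |log x| else 0 := by
  rw [integral_inv_of_pos hx (by positivity)]
  split_ifs with h
  · rw [log_div (by positivity) hx.ne']
    linarith [log_le_sub_one_of_pos (show 0 < x + 1 by positivity), neg_abs_le (log x)]
  · have hinv : (x + 1) / x - 1 = x⁻¹ := by
      field_simp
      ring
    have hlog := log_le_sub_one_of_pos (show 0 < (x + 1) / x by positivity)
    linarith [inv_le_one_of_one_le₀ (not_lt.1 h)]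

lemma integral_rpow_neg_le_of_one_lt {p x y : ℝ} (hp : 1 < p) (hx : 0 < x) (hxy : x ≤ y) :
    ∫ t in x..y, t ^ (-p) ≤ (p - 1)⁻¹ * x ^ (1 - p) := by
  have hnot : (0 : ℝ) ∉ uIcc x y := by
    rw [uIcc_of_le hxy]
    exact fun h => hx.not_ge h.1
  have hpos : 0 ≤ (p - 1)⁻¹ * y ^ (1 - p) :=
    mul_nonneg (inv_nonneg.2 (by linarith)) (rpow_nonneg (hx.le.trans hxy) _)
  calc ∫ t in x..y, t ^ (-p) = (p - 1)⁻¹ * x ^ (1 - p) - (p - 1)⁻¹ * y ^ (1 - p) := by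
        rw [integral_rpow (Or.inr ⟨by linarith, hnot⟩), neg_add_eq_sub, div_eq_inv_mul,
          ← neg_sub p 1, inv_neg]
        ring
    _ ≤ (p - 1)⁻¹ * x ^ (1 - p) := sub_le_self _ hpos

end IntegralRpow

theorem C_sigma_estimates_general (lam σ : ℝ) (hlam : 0 < lam) (hσ0 : 0 < σ) (hσ1 : σ < 1) :
    ∃ C : ℝ, 0 < C ∧ ∀ x : ℝ, 0 < x → ∃ Cx : ℝ,
      Tendsto (fun ε : ℝ =>
          ∫ y in {y : ℝ | 0 < y ∧ ε ≤ |x - y| ∧ |x - y| ≤ 1}, fracKernelK lam σ x y * (x - y))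
        (nhdsWithin 0 (Set.Ioi 0)) (nhds Cx) ∧
      (σ < 1 / 2 → |Cx| ≤ C) ∧
      (σ = 1 / 2 → |Cx| ≤ C * (1 + if x < 1 then |Real.log x| else 0)) ∧
      (1 / 2 < σ → |Cx| ≤ C * x ^ (1 - 2 * σ)) := by
  obtain ⟨D, hD, h⟩ := exists_tendsto_setIntegral_fracKernelK hlam hσ0.le hσ1.le
  -- With `0⁻¹ = 0`, the constant below is `D + 1` in the logarithmic case `σ = 1 / 2`.
  set q : ℝ := |1 - 2 * σ|⁻¹
  have hq : 0 ≤ q := by positivity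
  refine ⟨D * (1 + q) + 1, by positivity, fun x hx => ?_⟩
  obtain ⟨Cx, hlim, hCx⟩ := h x hx
  have hbound {b : ℝ} (hb : 0 ≤ b) (hI : ∫ t in x..x + 1, t ^ (-(2 * σ)) ≤ (1 + q) * b) :
      |Cx| ≤ (D * (1 + q) + 1) * b := by
    linarith [mul_le_mul_of_nonneg_left hI hD]
  refine ⟨Cx, hlim, fun hσ => ?_, fun hσ => hbound (by positivity) ?_,
    fun hσ => hbound (by positivity) ?_⟩
  · have hq_eq : (1 - 2 * σ)⁻¹ = q := by rw [← abs_of_pos (by linarith : 0 < 1 - 2 * σ)]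
    have hI := integral_rpow_neg_le_of_lt_one (p := 2 * σ) (by linarith) (by linarith) hx.le
      zero_le_one
    rw [one_rpow, mul_one] at hI
    simpa only [mul_one] using hbound zero_le_one (by linarith)
  · rw [hσ, mul_one_div_cancel two_ne_zero]
    simp only [rpow_neg_one]
    exact (integral_inv_le_one_add_abs_log hx).trans
      (le_mul_of_one_le_left (by positivity) (by linarith))
  · have hq_eq : (2 * σ - 1)⁻¹ = q := by
      rw [← abs_of_pos (by linarith : 0 < 2 * σ - 1), abs_sub_comm]
    refine (integral_rpow_neg_le_of_one_lt (by linarith) hx (by linarith)).trans ?_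
    gcongr
    linarith

/-- Existence and size estimates for `C_σ^λ(x)`. -/
theorem C_sigma_estimates (lam σ : ℝ) (hlam : 0 < lam) (hσ0 : 1 / 2 ≤ σ) (hσ1 : σ < 1) :
    ∃ C : ℝ, 0 < C ∧ ∀ x : ℝ, 0 < x → ∃ Cx : ℝ,
      Tendsto (fun ε : ℝ =>
          ∫ y in {y : ℝ | 0 < y ∧ ε ≤ |x - y| ∧ |x - y| ≤ 1}, fracKernelK lam σ x y * (x - y))
        (nhdsWithin 0 (Set.Ioi 0)) (nhds Cx) ∧
      (σ = 1 / 2 → |Cx| ≤ C * (1 + if x < 1 then |Real.log x| else 0)) ∧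
      (1 / 2 < σ → |Cx| ≤ C * x ^ (1 - 2 * σ)) := by
  obtain ⟨C, hC, h⟩ := C_sigma_estimates_general lam σ hlam (by linarith) hσ1
  exact ⟨C, hC, fun x hx => let ⟨Cx, hlim, _, hsize⟩ := h x hx; ⟨Cx, hlim, hsize⟩⟩
end
end

section
/- Let λ ≥ 1 and let u ∈ L^∞(ℝ₊) be a function belonging to C^α_+ for some 0 < α < 1 and satisfying ∫₀^∞ |u(y)|/(1+y) dy < ∞. Then for every x > 0, lim_{σ→0⁺} (1/Γ(−σ)) ∫₀^∞ (W_t^λ u(x) − u(x)) t^{−1−σ} dt = u(x). -/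
open Real MeasureTheory Set Filter

noncomputable section

open scoped Topology Asymptotics

/-!
The power `y ^ λ` is invariant under the Bessel heat semigroup, so `W_t^λ u(x) - u(x)` is
`W_t^λ` applied to `f(y) = u(y) - u(x) (y / x) ^ λ`, evaluated at `x`. As `f` vanishes at `x` to
order `α`, the Gaussian bound `W_t^λ(x, y) ≤ C t ^ (-1/2) exp(-(x - y)² / 4t)` gives
`W_t^λ u(x) - u(x) = O(t ^ (α / 2))` as `t → 0⁺`. As `t → ∞`, the bound with the extra factor
`(x y / t) ^ λ` makes `W_t^λ u(x)` decay like a power of `t`. Hence the Mellin transform at `-σ` of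
`t ↦ W_t^λ u(x) - u(x)` has a simple pole at `σ = 0`, which comes only from the constant tail
`-u(x)` and is `-u(x) / σ`, whereas `1 / Γ(-σ) ∼ -σ`.
-/

/-! ### Bounds for the modified Bessel function -/

lemma rpow_mul_Gamma_add_one_le {s a : ℝ} (hs : 0 < s) (ha : 0 < a) :
    s ^ a * Gamma (s + 1) ≤ Gamma (s + a + 1) := by
  -- By log-convexity, the slope `log s` of `log ∘ Γ` on `[s, s + 1]` is at most that on
  -- `[s + 1, s + 1 + a]`.
  have hslope := convexOn_log_Gamma.slope_mono_adjacent (x := s) (y := s + 1) (z := s + 1 + a)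
    hs (mem_Ioi.2 (by positivity)) (by linarith) (by linarith)
  have hΓ : 0 < Gamma s := Gamma_pos_of_pos hs
  have hΓ' : 0 < Gamma (s + 1) := Gamma_pos_of_pos (by positivity)
  have hlog : log (Gamma (s + 1)) - log (Gamma s) = log s := by
    rw [Gamma_add_one hs.ne', log_mul hs.ne' hΓ.ne']
    ring
  simp only [Function.comp_apply, hlog, add_sub_cancel_left, div_one] at hslope
  rw [le_div_iff₀ ha] at hslope
  rw [← log_le_log_iff (by positivity) (Gamma_pos_of_pos (by positivity)),
    log_mul (by positivity) hΓ'.ne', log_rpow hs, show s + a + 1 = s + 1 + a by ring]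
  linarith

lemma factorial_mul_Gamma_add_half (k : ℕ) :
    (k.factorial : ℝ) * Gamma (k + 1 / 2) = √π * (2 * k).factorial / 4 ^ k := by
  have h := Gamma_mul_Gamma_add_half ((k : ℝ) + 1 / 2)
  rw [show (k : ℝ) + 1 / 2 + 1 / 2 = k + 1 by ring, Gamma_nat_eq_factorial,
    show 2 * ((k : ℝ) + 1 / 2) = ((2 * k : ℕ) : ℝ) + 1 by push_cast; ring,
    Gamma_nat_eq_factorial, show 1 - (((2 * k : ℕ) : ℝ) + 1) = -((2 * k : ℕ) : ℝ) by ring,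
    rpow_neg two_pos.le, rpow_natCast, pow_mul] at h
  rw [mul_comm, h]
  norm_num
  ring

lemma factorial_mul_Gamma_add_half_add_ge {a : ℝ} (ha : 0 ≤ a) (k : ℕ) :
    √π * (2 * k).factorial / 4 ^ k * ((k + 1 / 2) ^ a / (1 + 2 * a)) ≤
      k.factorial * Gamma (k + 1 / 2 + a) := by
  rcases ha.eq_or_lt with rfl | ha
  · simp [← factorial_mul_Gamma_add_half]
  have hk : (0 : ℝ) < k + 1 / 2 := by positivity
  have : 0 < Gamma (k + 1 / 2 + a) := Gamma_pos_of_pos (by positivity)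
  have hconv := rpow_mul_Gamma_add_one_le hk ha
  rw [Gamma_add_one hk.ne', Gamma_add_one (by positivity)] at hconv
  have hlin : k + 1 / 2 + a ≤ (k + 1 / 2) * (1 + 2 * a) := by nlinarith [k.cast_nonneg (α := ℝ)]
  have hmain : (k + 1 / 2) ^ a * Gamma (k + 1 / 2) ≤ (1 + 2 * a) * Gamma (k + 1 / 2 + a) := by
    refine le_of_mul_le_mul_left ?_ hk
    calc (k + 1 / 2) * ((k + 1 / 2) ^ a * Gamma (k + 1 / 2))
        ≤ (k + 1 / 2 + a) * Gamma (k + 1 / 2 + a) := by linarith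
      _ ≤ (k + 1 / 2) * (1 + 2 * a) * Gamma (k + 1 / 2 + a) := by gcongr
      _ = (k + 1 / 2) * ((1 + 2 * a) * Gamma (k + 1 / 2 + a)) := by ring
  rw [← factorial_mul_Gamma_add_half, mul_assoc]
  gcongr
  rw [← mul_div_assoc, div_le_iff₀ (by positivity)]
  linarith

lemma besselI_term_nonneg {ν z : ℝ} (hν : -1 < ν) (hz : 0 ≤ z) (k : ℕ) :
    0 ≤ (z / 2) ^ (2 * (k : ℝ) + ν) / (k.factorial * Gamma (k + ν + 1)) := by
  have : 0 < Gamma (k + ν + 1) := Gamma_pos_of_pos (by linarith [k.cast_nonneg (α := ℝ)])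
  positivity

lemma besselI_nonneg {ν z : ℝ} (hν : -1 < ν) (hz : 0 ≤ z) : 0 ≤ besselI ν z :=
  tsum_nonneg (besselI_term_nonneg hν hz)

lemma besselI_term_le {ν z : ℝ} (hν : -(1 / 2) ≤ ν) (hz : 0 < z) (k : ℕ) :
    (z / 2) ^ (2 * (k : ℝ) + ν) / (k.factorial * Gamma (k + ν + 1)) ≤
      2 * (ν + 1) * z ^ ν * (z ^ (2 * k) / (2 * k).factorial / (2 * k + 1) ^ (ν + 1 / 2)) := by
  have ha : 0 ≤ ν + 1 / 2 := by linarith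
  have hden := factorial_mul_Gamma_add_half_add_ge ha k
  rw [show (k : ℝ) + 1 / 2 + (ν + 1 / 2) = k + ν + 1 by ring,
    show 1 + 2 * (ν + 1 / 2) = 2 * (ν + 1) by ring,
    show (k : ℝ) + 1 / 2 = (2 * k + 1) / 2 by ring,
    div_rpow (by positivity) two_pos.le] at hden
  have hν1 : 0 < ν + 1 := by linarith
  have hnum : (z / 2) ^ (2 * (k : ℝ) + ν) = z ^ (2 * k) * z ^ ν / (4 ^ k * 2 ^ ν) := by
    rw [div_rpow hz.le two_pos.le, rpow_add hz, rpow_add two_pos]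
    norm_cast
    rw [pow_mul 2 2 k]
    norm_num
  have hhalf : (2 : ℝ) ^ (ν + 1 / 2) = 2 ^ ν * √2 := by rw [rpow_add two_pos, sqrt_eq_rpow]
  have hsqrt : √2 ≤ √π := by gcongr; linarith [pi_gt_three]
  calc _ ≤ z ^ (2 * k) * z ^ ν / (4 ^ k * 2 ^ ν) / (√π * (2 * k).factorial / 4 ^ k *
        ((2 * k + 1) ^ (ν + 1 / 2) / 2 ^ (ν + 1 / 2) / (2 * (ν + 1)))) := by
        rw [hnum]
        gcongr
    _ = √2 / √π * (2 * (ν + 1) * z ^ ν *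
        (z ^ (2 * k) / (2 * k).factorial / (2 * k + 1) ^ (ν + 1 / 2))) := by
        rw [hhalf]
        field_simp
    _ ≤ _ := mul_le_of_le_one_left (by positivity) (div_le_one_of_le₀ hsqrt (by positivity))

lemma besselI_le_of_hasSum {ν z s : ℝ} {g : ℕ → ℝ} (hν : -1 < ν) (hz : 0 ≤ z)
    (hle : ∀ k : ℕ, (z / 2) ^ (2 * (k : ℝ) + ν) / (k.factorial * Gamma (k + ν + 1)) ≤ g k)
    (hg : HasSum g s) : besselI ν z ≤ s :=
  hg.tsum_eq ▸
    (hg.summable.of_nonneg_of_le (besselI_term_nonneg hν hz) hle).tsum_le_tsum hle hg.summable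

lemma cosh_le_exp {z : ℝ} (hz : 0 ≤ z) : cosh z ≤ exp z := by
  linarith [cosh_add_sinh z, sinh_nonneg_iff.2 hz]

lemma besselI_le_rpow_mul_exp {ν z : ℝ} (hν : -(1 / 2) ≤ ν) (hz : 0 < z) :
    besselI ν z ≤ 2 * (ν + 1) * z ^ ν * exp z := by
  have hν1 : 0 < ν + 1 := by linarith
  have hle (k : ℕ) : (z / 2) ^ (2 * (k : ℝ) + ν) / (k.factorial * Gamma (k + ν + 1)) ≤
      2 * (ν + 1) * z ^ ν * (z ^ (2 * k) / (2 * k).factorial) := by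
    refine (besselI_term_le hν hz k).trans ?_
    have : (1 : ℝ) ≤ 2 * k + 1 := by linarith [k.cast_nonneg (α := ℝ)]
    refine mul_le_mul_of_nonneg_left ?_ (by positivity)
    exact div_le_self (by positivity) (one_le_rpow this (by linarith))
  refine (besselI_le_of_hasSum (by linarith) hz.le hle ((hasSum_cosh z).mul_left _)).trans ?_
  gcongr
  exact cosh_le_exp hz.le

lemma rpow_le_one_add_pow {r a : ℝ} {m : ℕ} (hr : 0 ≤ r) (ha : 0 ≤ a) (ham : a ≤ m) :
    r ^ a ≤ 1 + r ^ m := by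
  rcases le_total r 1 with h | h
  · linarith [rpow_le_one hr h ha, pow_nonneg hr m]
  · linarith [(rpow_le_rpow_of_exponent_le h ham).trans_eq (rpow_natCast r m)]

lemma factorial_add_le (n m : ℕ) :
    (n + m).factorial ≤ n.factorial * (m.factorial * (n + 1) ^ m) := by
  rw [← Nat.factorial_mul_ascFactorial]
  gcongr
  exact Nat.ascFactorial_le_factorial_mul_pow (n + 1) m

lemma pow_div_factorial_mul_div_pow_le {z : ℝ} (hz : 0 ≤ z) (n m : ℕ) :
    z ^ n / n.factorial * (z / (n + 1)) ^ m ≤ m.factorial * (z ^ (n + m) / (n + m).factorial) := by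
  have h : ((n + m).factorial : ℝ) ≤ n.factorial * (m.factorial * (n + 1) ^ m) :=
    mod_cast factorial_add_le n m
  rw [div_pow, div_mul_div_comm, ← pow_add, ← mul_div_assoc, div_le_div_iff₀ (by positivity)
    (by positivity)]
  calc z ^ (n + m) * (n + m).factorial
      ≤ z ^ (n + m) * (n.factorial * (m.factorial * (n + 1) ^ m)) := by gcongr
    _ = m.factorial * z ^ (n + m) * (n.factorial * (n + 1) ^ m) := by ring

lemma exists_sqrt_mul_besselI_le {ν : ℝ} (hν : -(1 / 2) ≤ ν) :
    ∃ C, 0 < C ∧ ∀ z, 0 < z → √z * besselI ν z ≤ C * exp z := by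
  obtain ⟨n, hn⟩ := exists_nat_ge (ν + 1 / 2)
  have hν1 : 0 < ν + 1 := by linarith
  refine ⟨2 * (ν + 1) * (1 + (2 * n).factorial), by positivity, fun z hz ↦ ?_⟩
  -- The `k`-th term of `I_ν` is dominated by the `k`-th and the `(k + n)`-th term of `cosh z`.
  set c : ℕ → ℝ := fun k ↦ z ^ (2 * k) / (2 * k).factorial
  have hc : HasSum c (cosh z) := hasSum_cosh z
  have hshift : Summable fun k ↦ c (k + n) := (summable_nat_add_iff n).2 hc.summable
  have hterm (k : ℕ) : (z / 2) ^ (2 * (k : ℝ) + ν) / (k.factorial * Gamma (k + ν + 1)) ≤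
      2 * (ν + 1) / √z * (c k + (2 * n).factorial * c (k + n)) := by
    have hratio := rpow_le_one_add_pow (r := z / (2 * k + 1)) (m := 2 * n) (by positivity)
      (show 0 ≤ ν + 1 / 2 by linarith) (hn.trans (by push_cast; linarith [n.cast_nonneg (α := ℝ)]))
    have hpow := pow_div_factorial_mul_div_pow_le hz.le (2 * k) (2 * n)
    push_cast [← mul_add] at hpow
    calc _ ≤ _ := besselI_term_le hν hz k
      _ = 2 * (ν + 1) / √z * (c k * (z / (2 * k + 1)) ^ (ν + 1 / 2)) := by
        rw [div_rpow hz.le (by positivity), rpow_add hz, ← sqrt_eq_rpow]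
        simp only [c]
        field_simp
      _ ≤ 2 * (ν + 1) / √z * (c k * (1 + (z / (2 * k + 1)) ^ (2 * n))) := by gcongr
      _ ≤ _ := by
        gcongr
        linarith
  have hle := besselI_le_of_hasSum (by linarith) hz.le hterm
    ((hc.add (hshift.hasSum.mul_left _)).mul_left _)
  have htail : ∑' k, c (k + n) ≤ cosh z :=
    hc.tsum_eq ▸ tsum_comp_le_tsum_of_inj hc.summable (fun k ↦ by positivity)
      (add_left_injective n)
  calc √z * besselI ν z
      ≤ √z * (2 * (ν + 1) / √z * (cosh z + (2 * n).factorial * cosh z)) := by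
        gcongr
        exact hle.trans (by gcongr)
    _ = 2 * (ν + 1) * (1 + (2 * n).factorial) * cosh z := by field_simp
    _ ≤ _ := by
        gcongr
        exact cosh_le_exp hz.le

/-! ### Bounds for the heat kernel -/

lemma besselHeatKernel_nonneg {lam t x y : ℝ} (hlam : -(1 / 2) < lam) (ht : 0 ≤ t) (hx : 0 ≤ x)
    (hy : 0 ≤ y) : 0 ≤ besselHeatKernel lam t x y := by
  have := besselI_nonneg (ν := lam - 1 / 2) (z := x * y / (2 * t)) (by linarith) (by positivity)
  unfold besselHeatKernel
  positivity

lemma measurable_besselHeatKernel (lam x : ℝ) :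
    Measurable fun p : ℝ × ℝ ↦ besselHeatKernel lam p.1 x p.2 := by
  have hI : Measurable (besselI (lam - 1 / 2)) := Measurable.tsum fun k ↦ by fun_prop
  unfold besselHeatKernel
  fun_prop

lemma measurable_besselHeatKernel_right (lam t x : ℝ) :
    Measurable fun y ↦ besselHeatKernel lam t x y :=
  (measurable_besselHeatKernel lam x).comp measurable_prodMk_left

lemma besselHeatKernel_le_of_sqrt_mul_besselI_le {lam t x y B : ℝ} (ht : 0 < t) (hx : 0 ≤ x)
    (hy : 0 ≤ y)
    (hB : √(x * y / (2 * t)) * besselI (lam - 1 / 2) (x * y / (2 * t)) ≤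
      B * exp (x * y / (2 * t))) :
    besselHeatKernel lam t x y ≤ B / √(2 * t) * exp (-(x - y) ^ 2 / (4 * t)) := by
  have hexp : exp (-(x - y) ^ 2 / (4 * t)) =
      exp (x * y / (2 * t)) * exp (-(x ^ 2 + y ^ 2) / (4 * t)) := by
    rw [← exp_add]
    congr 1
    field_simp
    ring
  have hsqrt : √(x * y) / (2 * t) = √(x * y / (2 * t)) / √(2 * t) := by
    rw [sqrt_div (by positivity), div_div, mul_self_sqrt (by positivity)]
  calc besselHeatKernel lam t x y
      = √(x * y / (2 * t)) * besselI (lam - 1 / 2) (x * y / (2 * t)) / √(2 * t) *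
          exp (-(x ^ 2 + y ^ 2) / (4 * t)) := by rw [besselHeatKernel, hsqrt, div_mul_eq_mul_div]
    _ ≤ B * exp (x * y / (2 * t)) / √(2 * t) * exp (-(x ^ 2 + y ^ 2) / (4 * t)) := by gcongr
    _ = B / √(2 * t) * exp (-(x - y) ^ 2 / (4 * t)) := by
        rw [hexp]
        ring

lemma exists_besselHeatKernel_le {lam : ℝ} (hlam : 0 ≤ lam) :
    ∃ C, 0 < C ∧ ∀ t x y, 0 < t → 0 < x → 0 < y →
      besselHeatKernel lam t x y ≤ C / √(2 * t) * exp (-(x - y) ^ 2 / (4 * t)) := by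
  obtain ⟨C, hC, hle⟩ := exists_sqrt_mul_besselI_le (ν := lam - 1 / 2) (by linarith)
  exact ⟨C, hC, fun t x y ht hx hy ↦
    besselHeatKernel_le_of_sqrt_mul_besselI_le ht hx.le hy.le (hle _ (by positivity))⟩

lemma besselHeatKernel_le_rpow_mul {lam t x y : ℝ} (hlam : 0 ≤ lam) (ht : 0 < t) (hx : 0 < x)
    (hy : 0 < y) :
    besselHeatKernel lam t x y ≤ (2 * lam + 1) * (x * y / (2 * t)) ^ lam / √(2 * t) *
      exp (-(x - y) ^ 2 / (4 * t)) := by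
  have hz : 0 < x * y / (2 * t) := by positivity
  refine besselHeatKernel_le_of_sqrt_mul_besselI_le ht hx.le hy.le ?_
  calc _ ≤ √(x * y / (2 * t)) * (2 * (lam - 1 / 2 + 1) * (x * y / (2 * t)) ^ (lam - 1 / 2) *
        exp (x * y / (2 * t))) := by
        gcongr
        exact besselI_le_rpow_mul_exp (by linarith) hz
    _ = _ := by
        rw [rpow_sub hz, ← sqrt_eq_rpow]
        field_simp
        ring

/-! ### Invariance of `y ^ λ` -/

/-- The density at `y > 0` of the square root of a `Gamma(s, b)`-distributed variable, i.e. of the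
Nakagami distribution with shape `s` and spread `s / b`. Against the measure `y ^ λ dy` the heat
kernel is a Poisson mixture of these densities. -/
def nakagamiPDF (s b y : ℝ) : ℝ := 2 * b ^ s / Gamma s * (y ^ (2 * s - 1) * exp (-b * y ^ 2))

lemma nakagamiPDF_nonneg {s b y : ℝ} (hs : 0 < s) (hb : 0 ≤ b) (hy : 0 ≤ y) :
    0 ≤ nakagamiPDF s b y := by
  have := Gamma_pos_of_pos hs
  unfold nakagamiPDF
  positivity

lemma integrableOn_nakagamiPDF {s b : ℝ} (hs : 0 < s) (hb : 0 < b) :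
    IntegrableOn (nakagamiPDF s b) (Ioi 0) := by
  have hint := integrableOn_rpow_mul_exp_neg_mul_rpow (p := 2) (s := 2 * s - 1) (by linarith)
    two_pos hb
  simp only [rpow_two] at hint
  exact hint.const_mul _

lemma integral_nakagamiPDF {s b : ℝ} (hs : 0 < s) (hb : 0 < b) :
    ∫ y in Ioi 0, nakagamiPDF s b y = 1 := by
  have := Gamma_pos_of_pos hs
  have hint := integral_rpow_mul_exp_neg_mul_rpow (p := 2) (q := 2 * s - 1) two_pos
    (by linarith) hb
  simp only [rpow_two] at hint
  simp only [nakagamiPDF, integral_const_mul, hint]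
  rw [show (2 * s - 1 + 1) / 2 = s by ring, show -(2 * s - 1 + 1) / 2 = -s by ring, rpow_neg hb.le]
  field_simp

lemma besselHeatKernel_mul_rpow_eq_tsum {lam t x y : ℝ} (ht : 0 < t) (hx : 0 < x) (hy : 0 < y) :
    besselHeatKernel lam t x y * y ^ lam = ∑' k : ℕ,
      x ^ lam * exp (-(x ^ 2 / (4 * t))) * ((x ^ 2 / (4 * t)) ^ k / k.factorial) *
        nakagamiPDF (k + lam + 1 / 2) (4 * t)⁻¹ y := by
  have hT : 0 < 4 * t := by positivity
  rw [besselHeatKernel, besselI, ← tsum_mul_left, ← tsum_mul_right, ← tsum_mul_right]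
  refine tsum_congr fun k ↦ ?_
  have hq : 0 < x * y / (4 * t) := by positivity
  have hpow : √(x * y) / (2 * t) * (x * y / (2 * t) / 2) ^ (2 * (k : ℝ) + (lam - 1 / 2)) =
      2 * (x * y / (4 * t)) ^ (2 * k) * (x * y) ^ lam / (4 * t) ^ (lam + 1 / 2) := by
    have hsplit : (x * y / (4 * t)) ^ (2 * (k : ℝ) + (lam - 1 / 2)) =
        (x * y / (4 * t)) ^ (2 * k) * ((x * y / (4 * t)) ^ lam / √(x * y / (4 * t))) := by
      rw [rpow_add hq, rpow_sub hq, ← sqrt_eq_rpow]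
      norm_cast
    rw [show x * y / (2 * t) / 2 = x * y / (4 * t) by ring, hsplit, rpow_add hT, ← sqrt_eq_rpow,
      div_rpow (by positivity) hT.le, sqrt_div (by positivity),
      show 2 * t = √(4 * t) * √(4 * t) / 2 by rw [mul_self_sqrt hT.le]; ring]
    field_simp
  have hexp : exp (-(x ^ 2 + y ^ 2) / (4 * t)) =
      exp (-(x ^ 2 / (4 * t))) * exp (-(4 * t)⁻¹ * y ^ 2) := by
    rw [← exp_add]
    ring_nf
  have hy_pow : y ^ (2 * ((k : ℝ) + lam + 1 / 2) - 1) = y ^ (2 * k) * y ^ lam * y ^ lam := by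
    rw [← rpow_natCast, ← rpow_add hy, ← rpow_add hy]
    push_cast
    ring_nf
  rw [nakagamiPDF, ← mul_div_assoc, hpow, hexp, hy_pow, inv_rpow hT.le,
    show (k : ℝ) + lam + 1 / 2 = k + (lam + 1 / 2) by ring, rpow_add hT (k : ℝ), rpow_natCast,
    mul_rpow hx.le hy.le, show (k : ℝ) + (lam - 1 / 2) + 1 = k + (lam + 1 / 2) by ring]
  simp only [div_pow, mul_pow, ← pow_mul]
  field_simp
  ring

lemma integral_besselHeatKernel_mul_rpow {lam t x : ℝ} (hlam : -(1 / 2) < lam) (ht : 0 < t)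
    (hx : 0 < x) :
    ∫ y in Ioi 0, besselHeatKernel lam t x y * y ^ lam = x ^ lam := by
  have hs (k : ℕ) : 0 < (k : ℝ) + lam + 1 / 2 := by linarith [k.cast_nonneg (α := ℝ)]
  have hb : 0 < (4 * t)⁻¹ := by positivity
  set r := x ^ 2 / (4 * t)
  have hexp : HasSum (fun k : ℕ ↦ x ^ lam * exp (-r) * (r ^ k / k.factorial))
      (x ^ lam * exp (-r) * exp r) := by
    rw [exp_eq_exp_ℝ]
    exact (NormedSpace.expSeries_div_hasSum_exp r).mul_left _
  have hnorm (k : ℕ) : ∫ y in Ioi 0, ‖nakagamiPDF (k + lam + 1 / 2) (4 * t)⁻¹ y‖ = 1 :=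
    (setIntegral_congr_fun measurableSet_Ioi fun y hy ↦
      norm_of_nonneg (nakagamiPDF_nonneg (hs k) hb.le (mem_Ioi.1 hy).le)).trans
      (integral_nakagamiPDF (hs k) hb)
  rw [setIntegral_congr_fun measurableSet_Ioi fun y hy ↦ besselHeatKernel_mul_rpow_eq_tsum ht hx hy,
    ← integral_tsum_of_summable_integral_norm
      fun k ↦ (integrableOn_nakagamiPDF (hs k) hb).const_mul _]
  · simp only [integral_const_mul, integral_nakagamiPDF (hs _) hb, mul_one]
    rw [hexp.tsum_eq, mul_assoc, ← exp_add, neg_add_cancel, exp_zero, mul_one]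
  · simpa only [norm_mul, integral_const_mul, hnorm, mul_one] using hexp.summable.norm

lemma integrableOn_besselHeatKernel_mul_rpow {lam t x : ℝ} (hlam : -(1 / 2) < lam) (ht : 0 < t)
    (hx : 0 < x) : IntegrableOn (fun y ↦ besselHeatKernel lam t x y * y ^ lam) (Ioi 0) :=
  .of_integral_ne_zero <| by
    rw [integral_besselHeatKernel_mul_rpow hlam ht hx]
    positivity

/-! ### Behaviour of the semigroup for small and large time -/

lemma rpow_mul_exp_neg_sq_div_le {r q b : ℝ} (hr : 0 ≤ r) (hq : 0 ≤ q) (hb : 0 < b) :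
    r ^ q * exp (-r ^ 2 / b) ≤ (q * b / 2) ^ (q / 2) := by
  have h := ProbabilityTheory.rpow_abs_le_mul_exp_abs (r ^ 2) (t := b⁻¹) (p := q / 2)
    (by positivity) (by positivity)
  rw [abs_of_nonneg (by positivity), abs_of_nonneg (by positivity), ← rpow_two, ← rpow_mul hr,
    mul_div_cancel₀ _ two_ne_zero, div_inv_eq_mul, div_mul_eq_mul_div, inv_mul_eq_div,
    rpow_two] at h
  rwa [neg_div, exp_neg, ← div_eq_mul_inv, div_le_iff₀ (exp_pos _)]

lemma one_add_rpow_mul_exp_neg_sub_sq_div_le {x y q b : ℝ} (hy : -1 ≤ y) (hq : 0 ≤ q)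
    (hb : 0 < b) :
    (1 + y) ^ q * exp (-(x - y) ^ 2 / b) ≤ exp ((1 + x) ^ 2 / b) * (q * b) ^ (q / 2) := by
  have hsq : -(x - y) ^ 2 ≤ (1 + x) ^ 2 - (1 + y) ^ 2 / 2 := by
    linarith [sq_nonneg (2 * (1 + x) - (1 + y))]
  have hy1 : 0 ≤ 1 + y := by linarith
  calc (1 + y) ^ q * exp (-(x - y) ^ 2 / b)
      ≤ (1 + y) ^ q * exp (((1 + x) ^ 2 - (1 + y) ^ 2 / 2) / b) := by gcongr
    _ = exp ((1 + x) ^ 2 / b) * ((1 + y) ^ q * exp (-(1 + y) ^ 2 / (2 * b))) := by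
        rw [mul_left_comm, ← exp_add]
        congr 2
        field_simp
        ring
    _ ≤ _ := by
        gcongr
        refine (rpow_mul_exp_neg_sq_div_le hy1 hq (by positivity)).trans_eq ?_
        congr 1
        ring

lemma integrable_exp_neg_sub_sq_div (x : ℝ) {b : ℝ} (hb : 0 < b) :
    Integrable fun y ↦ exp (-(x - y) ^ 2 / b) := by
  simpa only [neg_mul, inv_mul_eq_div, neg_div] using
    (integrable_exp_neg_mul_sq (inv_pos.2 hb)).comp_sub_left x

lemma integral_exp_neg_sub_sq_div (x b : ℝ) : ∫ y, exp (-(x - y) ^ 2 / b) = √(π * b) := by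
  have h := integral_sub_left_eq_self (fun y ↦ exp (-b⁻¹ * y ^ 2)) volume x
  rw [integral_gaussian, div_inv_eq_mul] at h
  simpa only [neg_mul, inv_mul_eq_div, neg_div] using h

lemma exists_exp_neg_sub_sq_div_mul_one_add_rpow_le {α p δ : ℝ} (x : ℝ) (hα : 0 ≤ α) (hp : 0 ≤ p)
    (hδ : 0 < δ) :
    ∃ C, 0 ≤ C ∧ ∀ t ∈ Ioc 0 1, ∀ y, -1 ≤ y → δ ≤ |y - x| →
      exp (-(x - y) ^ 2 / (4 * t)) / √(2 * t) * (1 + y) ^ p ≤ C * t ^ (α / 2) := by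
  set M := exp ((1 + x) ^ 2 / 8) * (p * 8) ^ (p / 2)
  set K := (4 * (α + 1)) ^ (α / 2 + 1 / 2)
  refine ⟨M * (K / δ ^ (α + 1)), by positivity, fun t ⟨ht, ht1⟩ y hy hδy ↦ ?_⟩
  have hweight : exp (-(x - y) ^ 2 / 8) * (1 + y) ^ p ≤ M := by
    rw [mul_comm]
    exact one_add_rpow_mul_exp_neg_sub_sq_div_le hy hp (by norm_num)
  have hdecay : exp (-(x - y) ^ 2 / (8 * t)) / √t ≤ K / δ ^ (α + 1) * t ^ (α / 2) := by
    have h := rpow_mul_exp_neg_sq_div_le (abs_nonneg (x - y)) (show 0 ≤ α + 1 by positivity)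
      (show 0 < 8 * t by positivity)
    rw [sq_abs, show (α + 1) * (8 * t) / 2 = 4 * (α + 1) * t by ring,
      mul_rpow (by positivity) ht.le, add_div α, rpow_add ht, ← sqrt_eq_rpow] at h
    have hle : δ ^ (α + 1) ≤ |x - y| ^ (α + 1) := by
      rw [abs_sub_comm]
      gcongr
    rw [div_mul_eq_mul_div, div_le_div_iff₀ (by positivity) (by positivity)]
    have := mul_le_mul_of_nonneg_right hle (exp_pos (-(x - y) ^ 2 / (8 * t))).le
    linarith
  have hsplit : -(x - y) ^ 2 / (4 * t) ≤ -(x - y) ^ 2 / 8 + -(x - y) ^ 2 / (8 * t) := by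
    rw [neg_div, neg_div, neg_div, ← neg_add, neg_le_neg_iff,
      show (x - y) ^ 2 / (4 * t) = (x - y) ^ 2 / (8 * t) + (x - y) ^ 2 / (8 * t) by
        field_simp; ring]
    gcongr
    linarith
  have hy1 : 0 ≤ 1 + y := by linarith
  calc _ ≤ exp (-(x - y) ^ 2 / 8 + -(x - y) ^ 2 / (8 * t)) / √t * (1 + y) ^ p := by
        gcongr
        linarith
    _ = exp (-(x - y) ^ 2 / 8) * (1 + y) ^ p * (exp (-(x - y) ^ 2 / (8 * t)) / √t) := by
        rw [exp_add]
        ring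
    _ ≤ M * (K / δ ^ (α + 1) * t ^ (α / 2)) := by gcongr
    _ = _ := by ring

lemma abs_rpow_mul_exp_neg_sub_sq_div_le {x y t α : ℝ} (hα : 0 ≤ α) (ht : 0 < t) :
    |x - y| ^ α * exp (-(x - y) ^ 2 / (4 * t)) ≤
      (4 * α) ^ (α / 2) * t ^ (α / 2) * exp (-(x - y) ^ 2 / (8 * t)) := by
  have h := rpow_mul_exp_neg_sq_div_le (abs_nonneg (x - y)) hα (show 0 < 8 * t by positivity)
  rw [sq_abs, show α * (8 * t) / 2 = 4 * α * t by ring, mul_rpow (by positivity) ht.le] at h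
  rw [show -(x - y) ^ 2 / (4 * t) = -(x - y) ^ 2 / (8 * t) + -(x - y) ^ 2 / (8 * t) by
    field_simp; ring, exp_add, ← mul_assoc]
  gcongr

lemma exists_exp_neg_sub_sq_div_mul_norm_le {α p x : ℝ} {f : ℝ → ℝ} (hα : 0 ≤ α) (hp : 0 ≤ p)
    (hf : f =O[𝓝 x] fun y ↦ |y - x| ^ α) :
    ∃ C, 0 ≤ C ∧ ∀ t ∈ Ioc 0 1, ∀ y, -1 < y →
      exp (-(x - y) ^ 2 / (4 * t)) / √(2 * t) * ‖f y‖ ≤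
        C * t ^ (α / 2) * (exp (-(x - y) ^ 2 / (8 * t)) / √(2 * t) + ‖f y / (1 + y) ^ p‖) := by
  obtain ⟨A, hA, hfA⟩ := hf.exists_pos
  obtain ⟨δ, hδ, hnear⟩ := Metric.eventually_nhds_iff.1 hfA.bound
  obtain ⟨B, hB, hfar⟩ := exists_exp_neg_sub_sq_div_mul_one_add_rpow_le x hα hp hδ
  set K := (4 * α) ^ (α / 2)
  refine ⟨A * K + B, by positivity, fun t ht y hy ↦ ?_⟩
  have ht0 : 0 < t := ht.1
  have hy1 : 0 < 1 + y := by linarith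
  rcases lt_or_ge |y - x| δ with hyx | hyx
  · have hfy := hnear hyx
    rw [norm_of_nonneg (show 0 ≤ |y - x| ^ α by positivity), abs_sub_comm] at hfy
    calc _ ≤ exp (-(x - y) ^ 2 / (4 * t)) / √(2 * t) * (A * |x - y| ^ α) := by gcongr
      _ = A * (|x - y| ^ α * exp (-(x - y) ^ 2 / (4 * t))) / √(2 * t) := by ring
      _ ≤ A * (K * t ^ (α / 2) * exp (-(x - y) ^ 2 / (8 * t))) / √(2 * t) := by
          gcongr A * ?_ / _
          exact abs_rpow_mul_exp_neg_sub_sq_div_le hα ht0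
      _ = A * K * t ^ (α / 2) * (exp (-(x - y) ^ 2 / (8 * t)) / √(2 * t)) := by ring
      _ ≤ _ := by
          gcongr
          · exact le_add_of_nonneg_right hB
          · exact le_add_of_nonneg_right (norm_nonneg _)
  · calc _ = exp (-(x - y) ^ 2 / (4 * t)) / √(2 * t) * (1 + y) ^ p * ‖f y / (1 + y) ^ p‖ := by
          rw [norm_div, norm_of_nonneg (show 0 ≤ (1 + y) ^ p by positivity)]
          field_simp
      _ ≤ B * t ^ (α / 2) * ‖f y / (1 + y) ^ p‖ :=
          mul_le_mul_of_nonneg_right (hfar t ht y hy.le hyx) (norm_nonneg _)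
      _ ≤ _ := by
          gcongr
          · exact le_add_of_nonneg_left (by positivity)
          · exact le_add_of_nonneg_left (by positivity)

lemma exists_norm_besselHeatKernel_mul_le {lam α p x : ℝ} {f : ℝ → ℝ} (hlam : 0 ≤ lam)
    (hα : 0 ≤ α) (hp : 0 ≤ p) (hx : 0 < x) (hf : f =O[𝓝 x] fun y ↦ |y - x| ^ α) :
    ∃ C, 0 ≤ C ∧ ∀ t ∈ Ioc 0 1, ∀ y, 0 < y →
      ‖besselHeatKernel lam t x y * f y‖ ≤
        C * t ^ (α / 2) * (exp (-(x - y) ^ 2 / (8 * t)) / √(2 * t) + ‖f y / (1 + y) ^ p‖) := by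
  obtain ⟨B, hB, hW⟩ := exists_besselHeatKernel_le hlam
  obtain ⟨C, hC, hle⟩ := exists_exp_neg_sub_sq_div_mul_norm_le hα hp hf
  refine ⟨B * C, by positivity, fun t ht y hy ↦ ?_⟩
  rw [norm_mul, norm_of_nonneg (besselHeatKernel_nonneg (by linarith) ht.1.le hx.le hy.le)]
  calc besselHeatKernel lam t x y * ‖f y‖
      ≤ B / √(2 * t) * exp (-(x - y) ^ 2 / (4 * t)) * ‖f y‖ := by
        gcongr
        exact hW t x y ht.1 hx hy
    _ = B * (exp (-(x - y) ^ 2 / (4 * t)) / √(2 * t) * ‖f y‖) := by ring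
    _ ≤ B * _ := mul_le_mul_of_nonneg_left (hle t ht y (by linarith)) hB.le
    _ = _ := by ring

lemma heatSemigroup_isBigO_rpow {lam α p x : ℝ} {f : ℝ → ℝ} (hlam : 0 ≤ lam) (hα : 0 ≤ α)
    (hp : 0 ≤ p) (hx : 0 < x) (hf : IntegrableOn (fun y ↦ f y / (1 + y) ^ p) (Ioi 0))
    (hfx : f =O[𝓝 x] fun y ↦ |y - x| ^ α) :
    (fun t ↦ heatSemigroup lam f t x) =O[𝓝[>] 0] fun t ↦ t ^ (α / 2) := by
  obtain ⟨C, hC, hle⟩ := exists_norm_besselHeatKernel_mul_le hlam hα hp hx hfx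
  set N := ∫ y in Ioi 0, ‖f y / (1 + y) ^ p‖
  refine .of_bound (C * (√(4 * π) + N)) ?_
  filter_upwards [Ioc_mem_nhdsGT zero_lt_one] with t ht
  have ht0 : 0 < t := ht.1
  have hgauss : Integrable fun y ↦ exp (-(x - y) ^ 2 / (8 * t)) / √(2 * t) :=
    (integrable_exp_neg_sub_sq_div x (by positivity)).div_const _
  have hmass : ∫ y in Ioi 0, exp (-(x - y) ^ 2 / (8 * t)) / √(2 * t) ≤ √(4 * π) :=
    calc _ ≤ ∫ y, exp (-(x - y) ^ 2 / (8 * t)) / √(2 * t) :=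
          setIntegral_le_integral hgauss (ae_of_all _ fun y ↦ by positivity)
      _ = √(4 * π) := by
          rw [integral_div, integral_exp_neg_sub_sq_div, ← sqrt_div' _ (by positivity)]
          congr 1
          field_simp
          ring
  calc ‖heatSemigroup lam f t x‖
      ≤ ∫ y in Ioi 0, C * t ^ (α / 2) *
          (exp (-(x - y) ^ 2 / (8 * t)) / √(2 * t) + ‖f y / (1 + y) ^ p‖) :=
        norm_integral_le_of_norm_le ((hgauss.integrableOn.add hf.norm).const_mul _) <|
          ae_restrict_of_forall_mem measurableSet_Ioi (hle t ht)
    _ = C * t ^ (α / 2) * ((∫ y in Ioi 0, exp (-(x - y) ^ 2 / (8 * t)) / √(2 * t)) + N) := by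
        rw [integral_const_mul, integral_add hgauss.integrableOn hf.norm]
    _ ≤ C * t ^ (α / 2) * (√(4 * π) + N) := by gcongr
    _ = C * (√(4 * π) + N) * ‖t ^ (α / 2)‖ := by
        rw [norm_of_nonneg (by positivity)]
        ring

lemma exists_besselHeatKernel_mul_one_add_rpow_le {lam p x T : ℝ} (hlam : 0 ≤ lam) (hp : 0 ≤ p)
    (hx : 0 < x) (hT : 0 < T) :
    ∃ C, 0 ≤ C ∧ ∀ t, T ≤ t → ∀ y, 0 < y →
      besselHeatKernel lam t x y * (1 + y) ^ p ≤ C * t ^ ((p - lam - 1) / 2) := by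
  set q := lam + p
  have hq : 0 ≤ q := by positivity
  set A := (2 * lam + 1) * x ^ lam * exp ((1 + x) ^ 2 / (4 * T)) * (4 * q) ^ (q / 2)
  refine ⟨A, by positivity, fun t ht y hy ↦ ?_⟩
  have ht0 : 0 < t := hT.trans_le ht
  have hweight : y ^ lam * (1 + y) ^ p ≤ (1 + y) ^ q := by
    rw [rpow_add (by positivity)]
    gcongr
    linarith
  have hgauss : (1 + y) ^ q * exp (-(x - y) ^ 2 / (4 * t)) ≤
      exp ((1 + x) ^ 2 / (4 * T)) * ((4 * q) ^ (q / 2) * t ^ (q / 2)) := by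
    refine (one_add_rpow_mul_exp_neg_sub_sq_div_le (by linarith) hq (by positivity)).trans ?_
    rw [← mul_rpow (by positivity) ht0.le, show q * (4 * t) = 4 * q * t by ring]
    gcongr
  have hpow : t ^ (q / 2) / (t ^ lam * √t) = t ^ ((p - lam - 1) / 2) := by
    rw [sqrt_eq_rpow, ← rpow_add ht0, ← rpow_sub ht0]
    congr 1
    ring
  calc besselHeatKernel lam t x y * (1 + y) ^ p
      ≤ (2 * lam + 1) * (x * y / (2 * t)) ^ lam / √(2 * t) * exp (-(x - y) ^ 2 / (4 * t)) *
          (1 + y) ^ p := by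
        gcongr
        exact besselHeatKernel_le_rpow_mul hlam ht0 hx hy
    _ ≤ (2 * lam + 1) * (x * y / t) ^ lam / √t * exp (-(x - y) ^ 2 / (4 * t)) *
          (1 + y) ^ p := by
        gcongr <;> linarith
    _ = (2 * lam + 1) * x ^ lam / (t ^ lam * √t) *
          (y ^ lam * (1 + y) ^ p * exp (-(x - y) ^ 2 / (4 * t))) := by
        rw [div_rpow (by positivity) ht0.le, mul_rpow hx.le hy.le]
        field_simp
    _ ≤ (2 * lam + 1) * x ^ lam / (t ^ lam * √t) *
          (exp ((1 + x) ^ 2 / (4 * T)) * ((4 * q) ^ (q / 2) * t ^ (q / 2))) := by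
        refine mul_le_mul_of_nonneg_left (le_trans ?_ hgauss) (by positivity)
        gcongr
    _ = A * (t ^ (q / 2) / (t ^ lam * √t)) := by ring
    _ = A * t ^ ((p - lam - 1) / 2) := by rw [hpow]

lemma aestronglyMeasurable_of_integrableOn_div_one_add_rpow {p : ℝ} {u : ℝ → ℝ}
    (hu : IntegrableOn (fun y ↦ u y / (1 + y) ^ p) (Ioi 0)) :
    AEStronglyMeasurable u (volume.restrict (Ioi 0)) := by
  have hweight : Measurable fun y : ℝ ↦ (1 + y) ^ p := by fun_prop
  refine (hu.aestronglyMeasurable.mul hweight.aestronglyMeasurable).congr <|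
    ae_restrict_of_forall_mem measurableSet_Ioi fun y (hy : 0 < y) ↦ ?_
  exact div_mul_cancel₀ _ (by positivity)

lemma exists_norm_besselHeatKernel_mul_le_of_le {lam p x T : ℝ} (u : ℝ → ℝ) (hlam : 0 ≤ lam)
    (hp : 0 ≤ p) (hx : 0 < x) (hT : 0 < T) :
    ∃ C, 0 ≤ C ∧ ∀ t, T ≤ t → ∀ y, 0 < y →
      ‖besselHeatKernel lam t x y * u y‖ ≤
        C * t ^ ((p - lam - 1) / 2) * ‖u y / (1 + y) ^ p‖ := by
  obtain ⟨C, hC, hle⟩ := exists_besselHeatKernel_mul_one_add_rpow_le hlam hp hx hT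
  refine ⟨C, hC, fun t ht y hy ↦ ?_⟩
  have hpos : 0 < (1 + y) ^ p := by positivity
  have hW : 0 ≤ besselHeatKernel lam t x y :=
    besselHeatKernel_nonneg (by linarith) (hT.trans_le ht).le hx.le hy.le
  calc ‖besselHeatKernel lam t x y * u y‖
      = besselHeatKernel lam t x y * (1 + y) ^ p * ‖u y / (1 + y) ^ p‖ := by
        rw [norm_mul, norm_div, norm_of_nonneg hW, norm_of_nonneg hpos.le]
        field_simp
    _ ≤ _ := mul_le_mul_of_nonneg_right (hle t ht y hy) (norm_nonneg _)

lemma integrableOn_besselHeatKernel_mul {lam p t x : ℝ} {u : ℝ → ℝ} (hlam : 0 ≤ lam) (hp : 0 ≤ p)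
    (ht : 0 < t) (hx : 0 < x) (hu : IntegrableOn (fun y ↦ u y / (1 + y) ^ p) (Ioi 0)) :
    IntegrableOn (fun y ↦ besselHeatKernel lam t x y * u y) (Ioi 0) := by
  obtain ⟨C, -, hle⟩ := exists_norm_besselHeatKernel_mul_le_of_le u hlam hp hx ht
  exact (hu.norm.const_mul _).mono'
    ((measurable_besselHeatKernel_right lam t x).aestronglyMeasurable.mul
      (aestronglyMeasurable_of_integrableOn_div_one_add_rpow hu))
    (ae_restrict_of_forall_mem measurableSet_Ioi (hle t le_rfl))

lemma exists_norm_heatSemigroup_le {lam p x T : ℝ} {u : ℝ → ℝ} (hlam : 0 ≤ lam) (hp : 0 ≤ p)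
    (hx : 0 < x) (hT : 0 < T) (hu : IntegrableOn (fun y ↦ u y / (1 + y) ^ p) (Ioi 0)) :
    ∃ C, ∀ t, T ≤ t → ‖heatSemigroup lam u t x‖ ≤ C * t ^ ((p - lam - 1) / 2) := by
  obtain ⟨C, -, hle⟩ := exists_norm_besselHeatKernel_mul_le_of_le u hlam hp hx hT
  refine ⟨C * ∫ y in Ioi 0, ‖u y / (1 + y) ^ p‖, fun t ht ↦ ?_⟩
  calc ‖heatSemigroup lam u t x‖
      ≤ ∫ y in Ioi 0, C * t ^ ((p - lam - 1) / 2) * ‖u y / (1 + y) ^ p‖ :=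
        norm_integral_le_of_norm_le (hu.norm.const_mul _)
          (ae_restrict_of_forall_mem measurableSet_Ioi (hle t ht))
    _ = _ := by
        rw [integral_const_mul]
        ring

lemma heatSemigroup_isBigO_atTop {lam p x : ℝ} {u : ℝ → ℝ} (hlam : 0 ≤ lam) (hp : 0 ≤ p)
    (hx : 0 < x) (hu : IntegrableOn (fun y ↦ u y / (1 + y) ^ p) (Ioi 0)) :
    (fun t ↦ heatSemigroup lam u t x) =O[atTop] fun t ↦ t ^ ((p - lam - 1) / 2) := by
  obtain ⟨C, hC⟩ := exists_norm_heatSemigroup_le hlam hp hx one_pos hu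
  refine .of_bound C ?_
  filter_upwards [Ici_mem_atTop 1] with t ht
  have ht0 : 0 < t := one_pos.trans_le ht
  rw [norm_of_nonneg (show 0 ≤ t ^ ((p - lam - 1) / 2) by positivity)]
  exact hC t ht

lemma aestronglyMeasurable_heatSemigroup (lam x : ℝ) {u : ℝ → ℝ} {μ : Measure ℝ} [SFinite μ]
    (hu : AEStronglyMeasurable u (volume.restrict (Ioi 0))) :
    AEStronglyMeasurable (fun t ↦ heatSemigroup lam u t x) μ :=
  ((measurable_besselHeatKernel lam x).aestronglyMeasurable.mul hu.comp_snd).integral_prod_right'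

lemma locallyIntegrableOn_heatSemigroup {lam p x : ℝ} {u : ℝ → ℝ} (hlam : 0 ≤ lam) (hp : 0 ≤ p)
    (hx : 0 < x) (hu : IntegrableOn (fun y ↦ u y / (1 + y) ^ p) (Ioi 0)) :
    LocallyIntegrableOn (fun t ↦ heatSemigroup lam u t x) (Ioi 0) := by
  rw [locallyIntegrableOn_iff isOpen_Ioi.isLocallyClosed]
  intro K hK hKc
  rcases K.eq_empty_or_nonempty with rfl | hne
  · exact integrableOn_empty
  have hT : 0 < sInf K := hK (hKc.sInf_mem hne)
  obtain ⟨C, hC⟩ := exists_norm_heatSemigroup_le hlam hp hx hT hu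
  have hcont : ContinuousOn (fun t : ℝ ↦ C * t ^ ((p - lam - 1) / 2)) K := fun t ht ↦
    ((continuousAt_rpow_const t _ (.inl (hK ht).ne')).const_mul C).continuousWithinAt
  exact (hcont.integrableOn_compact hKc).mono'
    (aestronglyMeasurable_heatSemigroup lam x
      (aestronglyMeasurable_of_integrableOn_div_one_add_rpow hu))
    (ae_restrict_of_forall_mem hKc.measurableSet fun t ht ↦ hC t (csInf_le hKc.bddBelow ht))

lemma integrableOn_div_one_add_rpow_of_le {p q : ℝ} {u : ℝ → ℝ} (hpq : p ≤ q)
    (hu : IntegrableOn (fun y ↦ u y / (1 + y) ^ p) (Ioi 0)) :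
    IntegrableOn (fun y ↦ u y / (1 + y) ^ q) (Ioi 0) := by
  have hmeas := aestronglyMeasurable_of_integrableOn_div_one_add_rpow hu
  have hweight : Measurable fun y : ℝ ↦ (1 + y) ^ q := by fun_prop
  refine Integrable.mono hu (hmeas.div₀ hweight.aestronglyMeasurable) <|
    ae_restrict_of_forall_mem measurableSet_Ioi fun y (hy : 0 < y) ↦ ?_
  rw [norm_div, norm_div, norm_of_nonneg (show 0 ≤ (1 + y) ^ p by positivity),
    norm_of_nonneg (show 0 ≤ (1 + y) ^ q by positivity)]
  gcongr
  linarith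

lemma integrableOn_rpow_div_one_add_rpow {a q : ℝ} (ha : 0 ≤ a) (haq : a + 1 < q) :
    IntegrableOn (fun y : ℝ ↦ y ^ a / (1 + y) ^ q) (Ioi 0) := by
  have hweight : IntegrableOn (fun y : ℝ ↦ (y + 1) ^ (a - q)) (Ioi 0) :=
    integrableOn_add_rpow_Ioi_of_lt (by linarith) (by norm_num)
  have hmeas : Measurable fun y : ℝ ↦ y ^ a / (1 + y) ^ q := by fun_prop
  refine hweight.mono' hmeas.aestronglyMeasurable <|
    ae_restrict_of_forall_mem measurableSet_Ioi fun y (hy : 0 < y) ↦ ?_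
  rw [norm_of_nonneg (by positivity), rpow_sub (by positivity), add_comm y]
  gcongr
  linarith

lemma isBigO_sub_norm_sub_rpow_of_differentiableAt {E F : Type*} [NormedAddCommGroup E]
    [NormedSpace ℝ E] [NormedAddCommGroup F] [NormedSpace ℝ F] {g : E → F} {x : E} {α : ℝ}
    (hg : DifferentiableAt ℝ g x) (hα : α ≤ 1) :
    (fun y ↦ g y - g x) =O[𝓝 x] fun y ↦ ‖y - x‖ ^ α := by
  refine hg.isBigO_sub.trans (.of_bound 1 ?_)
  filter_upwards [Metric.ball_mem_nhds x one_pos] with y hy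
  rw [one_mul, norm_of_nonneg (show 0 ≤ ‖y - x‖ ^ α by positivity)]
  exact self_le_rpow_of_le_one (norm_nonneg _) (mem_ball_iff_norm.1 hy).le hα

lemma heatSemigroup_sub_isBigO_rpow {lam α p x : ℝ} {u : ℝ → ℝ} (hlam : 0 ≤ lam) (hα0 : 0 ≤ α)
    (hα1 : α ≤ 1) (hp : 0 ≤ p) (hx : 0 < x) (hu : IntegrableOn (fun y ↦ u y / (1 + y) ^ p) (Ioi 0))
    (hux : (fun y ↦ u y - u x) =O[𝓝 x] fun y ↦ |y - x| ^ α) :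
    (fun t ↦ heatSemigroup lam u t x - u x) =O[𝓝[>] 0] fun t ↦ t ^ (α / 2) := by
  set c := u x / x ^ lam
  have hc : c * x ^ lam = u x := div_mul_cancel₀ _ (by positivity)
  have hf : IntegrableOn (fun y ↦ (u y - c * y ^ lam) / (1 + y) ^ (p + lam + 2)) (Ioi 0) := by
    simp only [sub_div, mul_div_assoc]
    exact (integrableOn_div_one_add_rpow_of_le (by linarith) hu).sub
      ((integrableOn_rpow_div_one_add_rpow hlam (by linarith)).const_mul c)
  have hfx : (fun y ↦ u y - c * y ^ lam) =O[𝓝 x] fun y ↦ |y - x| ^ α := by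
    have hpow := isBigO_sub_norm_sub_rpow_of_differentiableAt (g := fun y ↦ c * y ^ lam)
      ((differentiableAt_rpow_const_of_ne lam hx.ne').const_mul c) hα1
    simpa only [hc, sub_sub_sub_cancel_right] using hux.sub hpow
  refine (heatSemigroup_isBigO_rpow hlam hα0 (by positivity) hx hf hfx).congr' ?_ .rfl
  filter_upwards [self_mem_nhdsWithin] with t (ht : 0 < t)
  have hlam' : -(1 / 2) < lam := by linarith
  simp only [heatSemigroup, mul_sub, mul_left_comm _ c]
  rw [integral_sub (integrableOn_besselHeatKernel_mul hlam hp ht hx hu)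
    ((integrableOn_besselHeatKernel_mul_rpow hlam' ht hx).const_mul c), integral_const_mul,
    integral_besselHeatKernel_mul_rpow hlam' ht hx, hc]

/-! ### The residue of the Mellin transform -/

lemma hasMellin_indicator_Ici_const {E : Type*} [NormedAddCommGroup E] [NormedSpace ℂ E]
    [CompleteSpace E] (c : E) {s : ℂ} (hs : s.re < 0) :
    HasMellin ((Ici 1).indicator fun _ ↦ c) s (-s⁻¹ • c) := by
  have hre : (s - 1).re < -1 := by
    rw [Complex.sub_re, Complex.one_re]
    linarith
  have heq : (fun t : ℝ ↦ (t : ℂ) ^ (s - 1) • (Ici 1).indicator (fun _ ↦ c) t) =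
      (Ici 1).indicator fun t : ℝ ↦ (t : ℂ) ^ (s - 1) • c := by
    ext t
    simp only [indicator_apply, smul_ite, smul_zero]
  constructor
  · have hint : IntegrableOn (fun t : ℝ ↦ (t : ℂ) ^ (s - 1) • c) (Ici 1) := by
      rw [integrableOn_Ici_iff_integrableOn_Ioi]
      exact (integrableOn_Ioi_cpow_of_lt hre one_pos).smul_const c
    rw [MellinConvergent, heq]
    exact (hint.integrable_indicator measurableSet_Ici).integrableOn
  · rw [mellin, heq, setIntegral_indicator measurableSet_Ici,
      inter_eq_self_of_subset_right (Ici_subset_Ioi.2 one_pos), integral_Ici_eq_integral_Ioi,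
      integral_smul_const, integral_Ioi_cpow_of_lt hre one_pos]
    simp [neg_div]

lemma tendsto_smul_mellin_of_add_isBigO {E : Type*} [NormedAddCommGroup E] [NormedSpace ℂ E]
    [CompleteSpace E] {f : ℝ → E} {c : E} {a b : ℝ} (ha : 0 < a) (hb : 0 < b)
    (hf : LocallyIntegrableOn f (Ioi 0)) (hf0 : f =O[𝓝[>] 0] fun t ↦ t ^ a)
    (hftop : (fun t ↦ f t + c) =O[atTop] fun t ↦ t ^ (-b)) :
    Tendsto (fun s : ℂ ↦ s • mellin f s) (𝓝[{s | s.re < 0}] 0) (𝓝 c) := by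
  set H : ℝ → E := (Ici 1).indicator fun _ ↦ c
  set F : ℝ → E := fun t ↦ f t + H t
  have hF : LocallyIntegrableOn F (Ioi 0) :=
    hf.add <| ((locallyIntegrable_const c).indicator measurableSet_Ici).locallyIntegrableOn _
  have hF0 : F =O[𝓝[>] 0] fun t ↦ t ^ (-(-a)) := by
    rw [neg_neg]
    refine hf0.congr' ?_ .rfl
    filter_upwards [Ioo_mem_nhdsGT one_pos] with t ht
    simp [F, H, ht.2]
  have hFtop : F =O[atTop] fun t ↦ t ^ (-b) := by
    refine hftop.congr' ?_ .rfl
    filter_upwards [Ici_mem_atTop 1] with t ht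
    simp [F, H, mem_Ici.1 ht]
  have hdiff : DifferentiableAt ℂ (mellin F) 0 :=
    mellin_differentiableAt_of_isBigO_rpow hF hFtop hb hF0 (by simpa using ha)
  have hlim : Tendsto (fun s : ℂ ↦ s • mellin F s + c) (𝓝[{s | s.re < 0}] 0) (𝓝 c) := by
    have h : Tendsto (fun s : ℂ ↦ s • mellin F s + c) (𝓝 0) (𝓝 ((0 : ℂ) • mellin F 0 + c)) :=
      (continuousAt_id.smul hdiff.continuousAt).tendsto.add_const c
    rw [zero_smul, zero_add] at h
    exact h.mono_left nhdsWithin_le_nhds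
  refine hlim.congr' ?_
  have hstrip : ∀ᶠ s : ℂ in 𝓝[{s | s.re < 0}] 0, -a < s.re :=
    nhdsWithin_le_nhds (Complex.continuous_re.continuousAt.eventually_const_lt (by simpa using ha))
  filter_upwards [hstrip, self_mem_nhdsWithin] with s hsa (hs : s.re < 0)
  have hs0 : s ≠ 0 := by
    rintro rfl
    exact hs.ne rfl
  obtain ⟨hH, hHs⟩ : HasMellin H s (-s⁻¹ • c) := hasMellin_indicator_Ici_const c hs
  have hFs : MellinConvergent F s :=
    mellinConvergent_of_isBigO_rpow hF hFtop (hs.trans hb) hF0 hsa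
  have hsub : mellin f s = mellin F s - mellin H s := by
    simpa only [F, add_sub_cancel_right] using (hasMellin_sub hFs hH).2
  rw [hsub, hHs, smul_sub, smul_smul, mul_neg, mul_inv_cancel₀ hs0, neg_one_smul, sub_neg_eq_add]

lemma ofReal_integral_mul_rpow_eq_mellin (f : ℝ → ℝ) (s : ℝ) :
    ((∫ t in Ioi 0, f t * t ^ (s - 1) : ℝ) : ℂ) = mellin (fun t ↦ (f t : ℂ)) s := by
  rw [mellin, ← integral_complex_ofReal]
  refine setIntegral_congr_fun measurableSet_Ioi fun t (ht : 0 < t) ↦ ?_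
  simp only [smul_eq_mul]
  rw [mul_comm, Complex.ofReal_mul, Complex.ofReal_cpow ht.le]
  push_cast
  rfl

lemma tendsto_mul_integral_mul_rpow {f : ℝ → ℝ} {c a b : ℝ} (ha : 0 < a) (hb : 0 < b)
    (hf : LocallyIntegrableOn f (Ioi 0)) (hf0 : f =O[𝓝[>] 0] fun t ↦ t ^ a)
    (hftop : (fun t ↦ f t + c) =O[atTop] fun t ↦ t ^ (-b)) :
    Tendsto (fun s ↦ s * ∫ t in Ioi 0, f t * t ^ (s - 1)) (𝓝[<] 0) (𝓝 c) := by
  have hleft : Tendsto (fun s : ℝ ↦ (s : ℂ)) (𝓝[<] 0) (𝓝[{s | s.re < 0}] 0) := by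
    refine tendsto_nhdsWithin_iff.2 ⟨?_, ?_⟩
    · exact (Complex.continuous_ofReal.tendsto' 0 0 rfl).mono_left nhdsWithin_le_nhds
    · filter_upwards [self_mem_nhdsWithin] with s hs
      exact hs
  have hfC : LocallyIntegrableOn (fun t ↦ (f t : ℂ)) (Ioi 0) := fun t ht ↦
    (hf t ht).imp fun _ h ↦ ⟨h.1, h.2.ofReal⟩
  have hf0C : (fun t ↦ (f t : ℂ)) =O[𝓝[>] 0] fun t ↦ t ^ a :=
    Complex.isBigO_ofReal_left.2 hf0
  have hftopC : (fun t ↦ (f t : ℂ) + c) =O[atTop] fun t ↦ t ^ (-b) := by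
    simpa using Complex.isBigO_ofReal_left.2 hftop
  have h := (tendsto_smul_mellin_of_add_isBigO ha hb hfC hf0C hftopC).comp hleft
  rw [← tendsto_ofReal_iff]
  refine h.congr fun s ↦ ?_
  simp [← ofReal_integral_mul_rpow_eq_mellin]

lemma tendsto_one_sub_div_Gamma_two_sub :
    Tendsto (fun σ : ℝ ↦ (1 - σ) / Real.Gamma (2 - σ)) (𝓝 0) (𝓝 1) := by
  have hΓ : ContinuousAt Real.Gamma (2 - 0) := by
    rw [sub_zero]
    exact differentiableOn_Gamma_Ioi.continuousOn.continuousAt (Ioi_mem_nhds two_pos)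
  have hcomp : ContinuousAt (fun σ : ℝ ↦ Real.Gamma (2 - σ)) 0 :=
    hΓ.comp (f := fun σ : ℝ ↦ 2 - σ) (by fun_prop)
  have h : ContinuousAt (fun σ : ℝ ↦ (1 - σ) / Real.Gamma (2 - σ)) 0 :=
    ContinuousAt.div (by fun_prop) hcomp (by simp)
  simpa using h.tendsto

lemma tendsto_one_div_gammaNeg_mul_integral {f : ℝ → ℝ} {c a b : ℝ} (ha : 0 < a) (hb : 0 < b)
    (hf : LocallyIntegrableOn f (Ioi 0)) (hf0 : f =O[𝓝[>] 0] fun t ↦ t ^ a)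
    (hftop : (fun t ↦ f t + c) =O[atTop] fun t ↦ t ^ (-b)) :
    Tendsto (fun σ ↦ 1 / gammaNeg σ * ∫ t in Ioi 0, f t * t ^ (-1 - σ)) (𝓝[>] 0) (𝓝 c) := by
  have hneg : Tendsto (fun σ : ℝ ↦ -σ) (𝓝[>] 0) (𝓝[<] 0) := by
    simpa using tendsto_neg_nhdsGT (a := (0 : ℝ))
  have h := (tendsto_one_sub_div_Gamma_two_sub.mono_left nhdsWithin_le_nhds).mul
    ((tendsto_mul_integral_mul_rpow ha hb hf hf0 hftop).comp hneg)
  rw [one_mul] at h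
  refine h.congr fun σ ↦ ?_
  rw [gammaNeg, one_div_div, Function.comp_apply, sub_eq_neg_add (-1) σ, ← sub_eq_add_neg]
  ring

/-! ### The limit -/

theorem limit_sigma_zero_general {lam α p x : ℝ} {u : ℝ → ℝ} (hlam : 0 ≤ lam) (hα0 : 0 < α)
    (hα1 : α ≤ 1) (hp0 : 0 ≤ p) (hp : p < lam + 1) (hx : 0 < x)
    (hu : IntegrableOn (fun y ↦ u y / (1 + y) ^ p) (Ioi 0))
    (hux : (fun y ↦ u y - u x) =O[𝓝 x] fun y ↦ |y - x| ^ α) :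
    Tendsto (fun σ ↦ 1 / gammaNeg σ *
        ∫ t in Ioi 0, (heatSemigroup lam u t x - u x) * t ^ (-1 - σ))
      (𝓝[>] 0) (𝓝 (u x)) := by
  have hdecay : (fun t ↦ heatSemigroup lam u t x - u x + u x) =O[atTop]
      fun t ↦ t ^ (-((lam + 1 - p) / 2)) := by
    simpa only [sub_add_cancel, ← neg_div, neg_sub, sub_sub] using
      heatSemigroup_isBigO_atTop hlam hp0 hx hu
  exact tendsto_one_div_gammaNeg_mul_integral (half_pos hα0) (half_pos (sub_pos.2 hp))
    ((locallyIntegrableOn_heatSemigroup hlam hp0 hx hu).sub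
      ((locallyIntegrable_const _).locallyIntegrableOn _))
    (heatSemigroup_sub_isBigO_rpow hlam hα0.le hα1 hp0 hx hu hux) hdecay

lemma MemHolderPlus.isBigO_sub {α x : ℝ} {u : ℝ → ℝ} (hu : MemHolderPlus α u) (hα : 0 < α)
    (hx : 0 < x) : (fun y ↦ u y - u x) =O[𝓝 x] fun y ↦ |y - x| ^ α := by
  obtain ⟨A, hA⟩ := hu.2.1
  refine .of_bound A ?_
  filter_upwards [Ioi_mem_nhds hx] with y hy
  rcases eq_or_ne y x with rfl | hyx
  · simp [zero_rpow hα.ne']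
  · have hpos : 0 < |y - x| ^ α := rpow_pos_of_pos (abs_pos.2 (sub_ne_zero.2 hyx)) α
    rw [norm_of_nonneg hpos.le, ← div_le_iff₀ hpos]
    exact hA ⟨y, x, hy, hx, hyx, rfl⟩

lemma MemHolderPlus.integrableOn_div_one_add {α : ℝ} {u : ℝ → ℝ} (hu : MemHolderPlus α u)
    (huL : IntegrableOn (fun y ↦ |u y| / (1 + y)) (Ioi 0)) :
    IntegrableOn (fun y ↦ u y / (1 + y) ^ (1 : ℝ)) (Ioi 0) := by
  simp only [rpow_one]
  have hcont : ContinuousOn (fun y ↦ u y / (1 + y)) (Ioi 0) :=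
    hu.1.div (by fun_prop) fun y (hy : 0 < y) ↦ by positivity
  refine Integrable.mono' huL (hcont.aestronglyMeasurable measurableSet_Ioi) <|
    ae_restrict_of_forall_mem measurableSet_Ioi fun y (hy : 0 < y) ↦ ?_
  rw [norm_div, norm_eq_abs, norm_of_nonneg (by positivity)]

/-- Pointwise limit of `Δ_λ^σ u` as `σ → 0⁺`. -/
theorem limit_sigma_zero
    (lam α : ℝ) (hlam : 1 ≤ lam) (hα0 : 0 < α) (hα1 : α < 1)
    (u : ℝ → ℝ) (hbdd : ∃ M : ℝ, ∀ x ∈ Set.Ioi (0 : ℝ), |u x| ≤ M)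
    (hu : MemHolderPlus α u)
    (huL : IntegrableOn (fun y => |u y| / (1 + y)) (Set.Ioi 0)) :
    ∀ x : ℝ, 0 < x →
      Tendsto (fun σ : ℝ => 1 / gammaNeg σ *
          ∫ t in Set.Ioi (0 : ℝ), (heatSemigroup lam u t x - u x) * t ^ (-1 - σ))
        (nhdsWithin 0 (Set.Ioi 0)) (nhds (u x)) := by
  intro x hx
  exact limit_sigma_zero_general (by linarith) hα0 hα1.le zero_le_one (by linarith) hx
    (hu.integrableOn_div_one_add huL) (hu.isBigO_sub hα0 hx)
end
end
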